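/- arXiv:1705.08777 — 3 statements merged into one kernel-verified Lean document; each statement's English description precedes it below -/
import Mathlib

section
/- Let S̃_8(8) ⊆ Sp_6(ℤ/8ℤ) denote the full preimage of the embedded copy of S_8 ⊆ Sp_6(ℤ/2ℤ) under the reduction map Sp_6(ℤ/8ℤ) → Sp_6(ℤ/2ℤ). Then no proper subgroup of S̃_8(8) has image under reduction modulo 2 equal to all of the embedded S_8; that is, every subgroup G ⊆ S̃_8(8) whose mod-2 image equals the embedded S_8 satisfies G = S̃_8(8). -/
open Matrix

/-- The standard symplectic matrix `Ω`, block-diagonal with `2×2` blocks `[[0,1],[-1,0]]`. -/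
def OmegaMat (g : ℕ) (R : Type) [CommRing R] : Matrix (Fin (2*g)) (Fin (2*g)) R :=
  Matrix.of fun i j =>
    if (i : ℕ) + 1 = (j : ℕ) ∧ (j : ℕ) % 2 = 1 then 1
    else if (j : ℕ) + 1 = (i : ℕ) ∧ (i : ℕ) % 2 = 1 then -1 else 0

/-- The symplectic group `Sp_{2g}(R)`, as a set of invertible matrices:
those `S` with `SᵀΩS = Ω`. -/
def SpSet (g : ℕ) (R : Type) [CommRing R] : Set (GL (Fin (2*g)) R) :=
  {S | (S : Matrix (Fin (2*g)) (Fin (2*g)) R)ᵀ * OmegaMat g R * S = OmegaMat g R}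

/-- The general symplectic group `GSp_{2g}(R)`, as a set of invertible matrices:
those `S` with `SᵀΩS = m·Ω` for some unit `m` (the multiplier). -/
def GSpSet (g : ℕ) (R : Type) [CommRing R] : Set (GL (Fin (2*g)) R) :=
  {S | ∃ m : Rˣ, (S : Matrix (Fin (2*g)) (Fin (2*g)) R)ᵀ * OmegaMat g R * S = (m : R) • OmegaMat g R}

/-- The all-ones vector `t ∈ V = (ℤ/2ℤ)^{2g+2}`. -/
def tvec (g : ℕ) : Fin (2*g+2) → ZMod 2 := fun _ => 1

/-- The line spanned by `t`. -/
def tline (g : ℕ) : Submodule (ZMod 2) (Fin (2*g+2) → ZMod 2) :=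
  Submodule.span (ZMod 2) {tvec g}

/-- `t^⊥`: the vectors of `V` orthogonal to `t` for the standard bilinear form
`⟨u,v⟩ = ∑ uᵢvᵢ`, i.e. those whose coordinates sum to zero. -/
def tperp (g : ℕ) : Set (Fin (2*g+2) → ZMod 2) := {v | ∑ i, v i = 0}

/-- The matrix of the map `ψ : M → V` sending the symplectic basis vector `f_{1,n}`
(column `2n-2`, 0-based) of `M = (ℤ/2ℤ)^{2g}` to `ē_1 + ⋯ + ē_{2n}` and `f_{2,n}`
(column `2n-1`) to `ē_{2n+1} + ē_1 + ⋯ + ē_{2n-1}`; `ψ` composed with the quotient map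
`t^⊥ → W = t^⊥/span(t)` is the identification of `M` with `W` used to realize the
isometries of `W` as the matrix group `Sp_{2g}(ℤ/2ℤ)`. -/
def PsiMat (g : ℕ) : Matrix (Fin (2*g+2)) (Fin (2*g)) (ZMod 2) :=
  Matrix.of fun k j =>
    if (j : ℕ) % 2 = 0 then (if (k : ℕ) < (j : ℕ) + 2 then 1 else 0)
    else (if (k : ℕ) < (j : ℕ) ∨ (k : ℕ) = (j : ℕ) + 1 then 1 else 0)

/-- The permutation matrix of `σ`, acting on coordinates of `V`: `(P_σ v) k = v (σ⁻¹ k)`. -/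
def permMat (g : ℕ) (σ : Equiv.Perm (Fin (2*g+2))) :
    Matrix (Fin (2*g+2)) (Fin (2*g+2)) (ZMod 2) :=
  Matrix.of fun k j => if σ j = k then 1 else 0

/-- `A ∈ Sp_{2g}(ℤ/2ℤ)` is the matrix (w.r.t. the symplectic basis carried by `ψ`) of the
action of the permutation `σ ∈ S_{2g+2}` on `W = t^⊥/span(t)`: this says that each column of
`Ψ·A − P_σ·Ψ` lies in `span(t)`, i.e. `ψ(A·m) ≡ σ·ψ(m) mod t` for every `m ∈ M`.
The embedded copy of `S_{2g+2}` inside `Sp_{2g}(ℤ/2ℤ)` is the set of matrices representing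
some permutation in this sense. -/
def representsPerm (g : ℕ) (A : Matrix (Fin (2*g)) (Fin (2*g)) (ZMod 2))
    (σ : Equiv.Perm (Fin (2*g+2))) : Prop :=
  ∀ j, (fun k => (PsiMat g * A - permMat g σ * PsiMat g) k j) ∈ tline g

/-- Entrywise reduction `GL_6(ℤ/8ℤ) → GL_6(ℤ/2ℤ)`. -/
def red82 : GL (Fin (2*3)) (ZMod (2^3)) →* GL (Fin (2*3)) (ZMod 2) :=
  Units.map ((ZMod.castHom (show (2:ℕ) ∣ 2^3 by norm_num) (ZMod 2)).mapMatrix.toMonoidHom)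

/-- `S̃_8(8) ⊆ Sp_6(ℤ/8ℤ)`: the full preimage of the embedded copy of `S_8 ⊆ Sp_6(ℤ/2ℤ)`
under the reduction `Sp_6(ℤ/8ℤ) → Sp_6(ℤ/2ℤ)`, as a set. -/
def StildeMod8Set : Set (GL (Fin (2*3)) (ZMod (2^3))) :=
  {x | x ∈ SpSet 3 (ZMod (2^3)) ∧ ∃ σ : Equiv.Perm (Fin (2*3+2)),
    representsPerm 3 ((red82 x : GL (Fin (2*3)) (ZMod 2))
      : Matrix (Fin (2*3)) (Fin (2*3)) (ZMod 2)) σ}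

namespace MM15

abbrev V2 := Fin (2*3) → ZMod 2
abbrev M2 := Matrix (Fin (2*3)) (Fin (2*3)) (ZMod 2)
abbrev M8 := Matrix (Fin (2*3)) (Fin (2*3)) (ZMod (2^3))
abbrev Om2 : M2 := OmegaMat 3 (ZMod 2)
abbrev Om8 : M8 := OmegaMat 3 (ZMod (2^3))

/-- Entrywise reduction of matrices. -/
def rd : M8 →+* M2 := (ZMod.castHom (show (2:ℕ) ∣ 2^3 by norm_num) (ZMod 2)).mapMatrix

/-- The seven roots (images of adjacent transpositions) in coordinates. -/
def rootA : Fin 7 → V2 :=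
  ![![1,0,0,0,0,0], ![1,1,0,0,0,0], ![1,0,1,0,0,0], ![0,0,1,1,0,0], ![0,0,1,0,1,0],
    ![0,0,0,0,1,1], ![0,0,0,0,1,0]]

/-- Lifts of the roots to `ℤ/8`. -/
def rootB : Fin 7 → Fin (2*3) → ZMod (2^3) :=
  ![![1,0,0,0,0,0], ![1,1,0,0,0,0], ![1,0,1,0,0,0], ![0,0,1,1,0,0], ![0,0,1,0,1,0],
    ![0,0,0,0,1,1], ![0,0,0,0,1,0]]

/-- The infinitesimal transvection. -/
def Nm {R : Type} [CommRing R] (v : Fin (2*3) → R) : Matrix (Fin (2*3)) (Fin (2*3)) R :=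
  vecMulVec v (v ᵥ* OmegaMat 3 R)

def Tm {R : Type} [CommRing R] (v : Fin (2*3) → R) : Matrix (Fin (2*3)) (Fin (2*3)) R :=
  1 + Nm v

/-- The symplectic pairing mod 2. -/
def br (v w : V2) : ZMod 2 := v ⬝ᵥ (Om2 *ᵥ w)

lemma br_formula (v w : V2) : br v w = v 0 * w 1 + v 1 * w 0 + v 2 * w 3 + v 3 * w 2
    + v 4 * w 5 + v 5 * w 4 := by
  simp [br, dotProduct, mulVec, OmegaMat, Fin.sum_univ_six]

lemma Om2_T : Om2ᵀ = Om2 := by decide +kernel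
lemma Om2_sq : Om2 * Om2 = 1 := by decide +kernel

lemma char2 {x : ZMod 2} : x + x = 0 := by revert x; decide
lemma mchar2 (x : M2) : x + x = 0 := by ext i j; exact char2

lemma represents (k : Fin 7) :
    representsPerm 3 (Tm (rootA k)) (Equiv.swap (k.castSucc : Fin 8) (k.succ : Fin 8)) := by
  have h : ∀ k : Fin 7, ∀ j : Fin (2*3),
    (∀ i : Fin (2*3+2), (PsiMat 3 * Tm (rootA k) - permMat 3 (Equiv.swap (k.castSucc : Fin 8) (k.succ : Fin 8)) * PsiMat 3) i j = 0) ∨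
    (∀ i : Fin (2*3+2), (PsiMat 3 * Tm (rootA k) - permMat 3 (Equiv.swap (k.castSucc : Fin 8) (k.succ : Fin 8)) * PsiMat 3) i j = 1) := by
    decide +kernel
  intro j
  rcases h k j with h | h
  · have : (fun i => (PsiMat 3 * Tm (rootA k) - permMat 3 (Equiv.swap (k.castSucc : Fin 8) (k.succ : Fin 8)) * PsiMat 3) i j) = 0 := funext h
    rw [this]; exact Submodule.zero_mem _
  · have : (fun i => (PsiMat 3 * Tm (rootA k) - permMat 3 (Equiv.swap (k.castSucc : Fin 8) (k.succ : Fin 8)) * PsiMat 3) i j) = tvec 3 := funext h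
    rw [this]; exact Submodule.subset_span rfl

lemma br_self (v : V2) : br v v = 0 := by
  rw [br_formula]; have := fun x : ZMod 2 => @char2 x; grind

lemma br_symm (v w : V2) : br v w = br w v := by
  rw [br_formula, br_formula]; ring

lemma br_add_left (u v w : V2) : br (u + v) w = br u w + br v w := by
  simp [br, add_dotProduct]

lemma br_add_right (u v w : V2) : br u (v + w) = br u v + br u w := by
  simp [br, mulVec_add, dotProduct_add]

lemma br_smul_left (c : ZMod 2) (v w : V2) : br (c • v) w = c * br v w := by
  simp [br]

lemma br_smul_right (c : ZMod 2) (v w : V2) : br v (c • w) = c * br v w := by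
  simp [br, mulVec_smul]

lemma Nm_mulVec (v w : V2) : Nm v *ᵥ w = br v w • v := by
  rw [Nm, vecMulVec_mulVec, ← dotProduct_mulVec]
  ext i; simp [br, mul_comm]

lemma Tm_mulVec (v w : V2) : Tm v *ᵥ w = w + br v w • v := by
  rw [Tm, add_mulVec, one_mulVec, Nm_mulVec]

lemma ext_mulVec {A B : M2} (h : ∀ w, A *ᵥ w = B *ᵥ w) : A = B := by
  ext i j
  have := congrFun (h (Pi.single j 1)) i
  simpa using this

lemma Nm_sq (v : V2) : Nm v * Nm v = 0 := by
  apply ext_mulVec; intro w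
  rw [← mulVec_mulVec, Nm_mulVec, Nm_mulVec, br_smul_right, br_self]; simp

lemma Tm_sq (v : V2) : Tm v * Tm v = 1 := by
  have := Nm_sq v
  have h := mchar2 (Nm v)
  calc Tm v * Tm v = 1 + (Nm v + Nm v) + Nm v * Nm v := by rw [Tm]; noncomm_ring
    _ = 1 := by rw [h, this]; simp

/-- adjointness of a transvection -/
lemma br_Tm (y v w : V2) : br (Tm y *ᵥ v) w = br v (Tm y *ᵥ w) := by
  rw [Tm_mulVec, Tm_mulVec, br_add_left, br_add_right, br_smul_left, br_smul_right,
    br_symm v y]; ring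

/-- the Lie algebra -/
def LieL : Submodule (ZMod 2) M2 where
  carrier := {A | ∀ v w, br v (A *ᵥ w) = br w (A *ᵥ v)}
  zero_mem' := by intro v w; simp [br]
  add_mem' := by
    intro A B hA hB v w
    rw [add_mulVec, add_mulVec, br_add_right, br_add_right, hA, hB]
  smul_mem' := by
    intro c A hA v w
    rw [smul_mulVec, smul_mulVec, br_smul_right, br_smul_right, hA]

lemma mem_LieL {A : M2} : A ∈ LieL ↔ ∀ v w, br v (A *ᵥ w) = br w (A *ᵥ v) := Iff.rfl

lemma conj_Nm (y v : V2) : Tm y * Nm v * Tm y = Nm (Tm y *ᵥ v) := by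
  apply ext_mulVec; intro w
  rw [← mulVec_mulVec, ← mulVec_mulVec, Nm_mulVec, Nm_mulVec, mulVec_smul, br_Tm]

lemma LieL_of_mat {A : M2} (h : Aᵀ * Om2 + Om2 * A = 0) : A ∈ LieL := by
  intro v w
  have h1 : Om2 * A = Aᵀ * Om2 := by
    have := mchar2 (Aᵀ * Om2)
    calc Om2 * A = (Aᵀ * Om2 + Om2 * A) + (Aᵀ * Om2) := by
          rw [add_right_comm, this, zero_add]
      _ = _ := by rw [h, zero_add]
  unfold br
  rw [mulVec_mulVec, mulVec_mulVec, dotProduct_mulVec, ← mulVec_transpose, transpose_mul, Om2_T,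
    ← h1, dotProduct_comm]

/-- the Lie algebra is spanned by the `Nm v`. -/
lemma LieL_le (S : Submodule (ZMod 2) M2) (hS : ∀ v, Nm v ∈ S) : LieL ≤ S := by
  intro A hA
  have hp : ∀ v w, vecMulVec v (w ᵥ* Om2) + vecMulVec w (v ᵥ* Om2) ∈ S := by
    intro v w
    have : vecMulVec v (w ᵥ* Om2) + vecMulVec w (v ᵥ* Om2) = Nm (v + w) - Nm v - Nm w := by
      simp only [Nm, add_vecMul, add_vecMulVec, vecMulVec_add]; abel
    rw [this]
    exact S.sub_mem (S.sub_mem (hS _) (hS _)) (hS _)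
  let e : Fin (2*3) → V2 := fun i => Pi.single i 1
  let Q : M2 := A * Om2
  have hQ : ∀ i j, Q i j = Q j i := by
    have hsym : Qᵀ = Q := by
      have h1 : (Om2 * A)ᵀ = Om2 * A := by
        ext i j
        have := hA (e i) (e j)
        unfold br at this
        rw [mulVec_mulVec, mulVec_mulVec] at this
        simp [e] at this
        rw [transpose_apply]; exact this.symm
      have h2 : Q = Om2 * (Om2 * A) * Om2 := by rw [← mul_assoc, Om2_sq, one_mul]
      rw [h2, transpose_mul, transpose_mul, h1, Om2_T]
      simp only [mul_assoc]
    intro i j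
    exact (congrFun (congrFun hsym i) j).symm
  have hdec : Q = ∑ i, ∑ j, (if i < j then Q i j • (vecMulVec (e i) (e j) + vecMulVec (e j) (e i))
      else if i = j then Q i i • vecMulVec (e i) (e i) else 0) := by
    ext a b
    rw [Matrix.sum_apply]
    simp only [Matrix.sum_apply]
    revert a b
    have H : ∀ a b : Fin 6, Q a b = ∑ i : Fin 6, ∑ j : Fin 6, ((if i < j then Q i j • (vecMulVec (e i) (e j) + vecMulVec (e j) (e i))
      else if i = j then Q i i • vecMulVec (e i) (e i) else 0) : M2) a b := by
      intro a b
      have := hQ a b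
      fin_cases a <;> fin_cases b <;>
      simp [Fin.sum_univ_six, e, vecMulVec_apply] <;> exact this
    exact H
  have hA2 : A = Q * Om2 := by
    show A = A * Om2 * Om2
    rw [mul_assoc, Om2_sq, mul_one]
  rw [hA2, hdec]
  simp only [Finset.sum_mul]
  refine S.sum_mem fun i _ => S.sum_mem fun j _ => ?_
  split_ifs
  · rw [smul_mul_assoc, add_mul, vecMulVec_mul, vecMulVec_mul]
    exact S.smul_mem _ (hp _ _)
  · rw [smul_mul_assoc, vecMulVec_mul]
    exact S.smul_mem _ (hS _)
  · simp

def uu : Fin 8 → V2 :=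
  ![rootA 0 + rootA 1 + rootA 2 + rootA 3 + rootA 4 + rootA 5 + rootA 6,
    rootA 1 + rootA 2 + rootA 3 + rootA 4 + rootA 5 + rootA 6,
    rootA 2 + rootA 3 + rootA 4 + rootA 5 + rootA 6,
    rootA 3 + rootA 4 + rootA 5 + rootA 6,
    rootA 4 + rootA 5 + rootA 6, rootA 5 + rootA 6, rootA 6, 0]

lemma V2_eta (v : V2) : v = ![v 0, v 1, v 2, v 3, v 4, v 5] := by
  ext i
  have : ∀ i : Fin 6, v i = (![v 0, v 1, v 2, v 3, v 4, v 5] : Fin 6 → ZMod 2) i := by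
    intro i; fin_cases i <;> rfl
  exact this i

lemma V2_ind (P : V2 → Prop) (h : ∀ a b c d e f : ZMod 2, P ![a, b, c, d, e, f]) (v : V2) :
    P v := by
  rw [V2_eta v]; apply h

lemma uu_step : ∀ i j : Fin 8, i < j → (∃ k, rootA k = uu i + uu j) ∨
    (∃ k, ∃ i' : Fin 8, i < i' ∧ i' < j ∧ br (rootA k) (uu i' + uu j) = 1 ∧
      uu i' + uu j + rootA k = uu i + uu j) := by
  decide +kernel

lemma uu_cover : ∀ v : V2, v = 0 ∨ (∃ i j : Fin 8, i < j ∧ v = uu i + uu j) ∨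
    (∃ i j k : Fin 8, i < j ∧ j < k ∧ k < 7 ∧ v = uu i + uu j + uu k) := by
  apply V2_ind
  decide +kernel

lemma all_Nm (S : Submodule (ZMod 2) M2)
    (hc : ∀ k, ∀ A ∈ S, Tm (rootA k) * A * Tm (rootA k) ∈ S)
    (h0 : Nm (rootA 0) ∈ S) : ∀ v, Nm v ∈ S := by
  have step : ∀ v k, Nm v ∈ S → br (rootA k) v = 1 → Nm (v + rootA k) ∈ S := by
    intro v k hv hb
    have := hc k _ hv
    rwa [conj_Nm, Tm_mulVec, hb, one_smul] at this
  have next : ∀ k k', br (rootA k') (rootA k) = 1 → br (rootA k) (rootA k + rootA k') = 1 →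
      rootA k + rootA k' + rootA k = rootA k' → Nm (rootA k) ∈ S → Nm (rootA k') ∈ S := by
    intro k k' h1 h2 h3 h
    rw [← h3]
    exact step _ _ (step _ _ h h1) h2
  have r1 := next 0 1 (by decide +kernel) (by decide +kernel) (by decide +kernel) h0
  have r2 := next 1 2 (by decide +kernel) (by decide +kernel) (by decide +kernel) r1
  have r3 := next 2 3 (by decide +kernel) (by decide +kernel) (by decide +kernel) r2
  have r4 := next 3 4 (by decide +kernel) (by decide +kernel) (by decide +kernel) r3
  have r5 := next 4 5 (by decide +kernel) (by decide +kernel) (by decide +kernel) r4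
  have r6 := next 5 6 (by decide +kernel) (by decide +kernel) (by decide +kernel) r5
  have hr : ∀ k, Nm (rootA k) ∈ S := by
    intro k; fin_cases k <;> assumption
  have huu : ∀ n : ℕ, ∀ i j : Fin 8, i < j → (j : ℕ) - (i : ℕ) ≤ n → Nm (uu i + uu j) ∈ S := by
    intro n
    induction n with
    | zero => intro i j h1 h2; exfalso; have : (i : ℕ) < j := h1; omega
    | succ n ih =>
      intro i j h1 h2
      rcases uu_step i j h1 with ⟨k, hk⟩ | ⟨k, i', h3, h4, h5, h6⟩
      · rw [← hk]; exact hr k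
      · rw [← h6]
        refine step _ _ (ih i' j h4 ?_) h5
        have h3' : (i : ℕ) < i' := h3
        omega
  have huu' : ∀ i j : Fin 8, i < j → Nm (uu i + uu j) ∈ S := fun i j h => huu _ i j h le_rfl
  have hu : ∀ i : Fin 8, i < 7 → Nm (uu i) ∈ S := by
    intro i hi
    have := huu' i 7 hi
    have h7 : uu 7 = 0 := rfl
    rwa [h7, add_zero] at this
  intro v
  rcases uu_cover v with rfl | ⟨i, j, hij, rfl⟩ | ⟨i, j, k, hij, hjk, hk, rfl⟩
  · have : Nm (0 : V2) = 0 := by simp [Nm]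
    rw [this]; exact S.zero_mem
  · exact huu' i j hij
  · have key : Nm (uu i + uu j + uu k) = Nm (uu i + uu j) + Nm (uu j + uu k) + Nm (uu i + uu k)
        - Nm (uu i) - Nm (uu j) - Nm (uu k) := by
      simp only [Nm, add_vecMul, add_vecMulVec, vecMulVec_add]; abel
    rw [key]
    exact S.sub_mem (S.sub_mem (S.sub_mem (S.add_mem (S.add_mem (huu' i j hij) (huu' j k hjk))
      (huu' i k (hij.trans hjk))) (hu i (hij.trans (hjk.trans hk)))) (hu j (hjk.trans hk))) (hu k hk)

lemma exists_root : ∀ u : V2, br u (rootA 0) = 0 → u ≠ 0 → u = rootA 0 ∨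
    br (rootA 2) u = 1 ∨ br (rootA 3) u = 1 ∨ br (rootA 4) u = 1 ∨ br (rootA 5) u = 1 ∨
    br (rootA 6) u = 1 := by
  apply V2_ind
  decide +kernel

lemma br_conj (y u w : V2) (m : M2) :
    br u ((Tm y * m * Tm y) *ᵥ w) = br (Tm y *ᵥ u) (m *ᵥ (Tm y *ᵥ w)) := by
  rw [br_Tm, mulVec_mulVec, mulVec_mulVec, mul_assoc]

/-- Part one of the functional argument. -/
lemma U_lemma (S : Submodule (ZMod 2) M2)
    (hc : ∀ k, ∀ A ∈ S, Tm (rootA k) * A * Tm (rootA k) ∈ S)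
    (u : V2) (hu : ∀ m ∈ S, br u (m *ᵥ rootA 0) = 0) (hz : br u (rootA 0) = 0) (hne : u ≠ 0) :
    ∀ m ∈ S, br (rootA 0) (m *ᵥ rootA 0) = 0 := by
  let U : V2 → Prop := fun u => ∀ m ∈ S, br u (m *ᵥ rootA 0) = 0
  have step : ∀ u k, U u → br (rootA k) (rootA 0) = 0 → br (rootA k) u = 1 → U (rootA k) := by
    intro u k hU h0 h1 m hm
    have h2 := hU _ (hc k m hm)
    have h3 := hU m hm
    rw [br_conj, Tm_mulVec, Tm_mulVec, h0, h1, zero_smul, add_zero, one_smul, br_add_left, h3,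
      zero_add] at h2
    exact h2
  have fin : U (rootA 2) → U (rootA 4) → U (rootA 6) → U (rootA 0) := by
    intro h2 h4 h6 m hm
    have : rootA 0 = rootA 2 + rootA 4 + rootA 6 := by decide +kernel
    have e : br (rootA 2 + rootA 4 + rootA 6) (m *ᵥ rootA 0) = 0 := by
      rw [br_add_left, br_add_left, h2 m hm, h4 m hm, h6 m hm]; rfl
    rwa [← this] at e
  have s23 := fun h => step (rootA 2) 3 h (by decide +kernel) (by decide +kernel)
  have s34 := fun h => step (rootA 3) 4 h (by decide +kernel) (by decide +kernel)
  have s45 := fun h => step (rootA 4) 5 h (by decide +kernel) (by decide +kernel)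
  have s56 := fun h => step (rootA 5) 6 h (by decide +kernel) (by decide +kernel)
  have s32 := fun h => step (rootA 3) 2 h (by decide +kernel) (by decide +kernel)
  have s43 := fun h => step (rootA 4) 3 h (by decide +kernel) (by decide +kernel)
  have s54 := fun h => step (rootA 5) 4 h (by decide +kernel) (by decide +kernel)
  have s65 := fun h => step (rootA 6) 5 h (by decide +kernel) (by decide +kernel)
  have all : (U (rootA 2) ∨ U (rootA 3) ∨ U (rootA 4) ∨ U (rootA 5) ∨ U (rootA 6)) →
      U (rootA 0) := by
    intro h
    have h2 : U (rootA 2) := by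
      rcases h with h | h | h | h | h
      · exact h
      · exact s32 h
      · exact s32 (s43 h)
      · exact s32 (s43 (s54 h))
      · exact s32 (s43 (s54 (s65 h)))
    have h3 := s23 h2
    have h4 := s34 h3
    have h6 := s56 (s45 h4)
    exact fin h2 h4 h6
  rcases exists_root u hz hne with rfl | h | h | h | h | h
  · exact hu
  · exact all (Or.inl (step u 2 hu (by decide +kernel) h))
  · exact all (Or.inr (Or.inl (step u 3 hu (by decide +kernel) h)))
  · exact all (Or.inr (Or.inr (Or.inl (step u 4 hu (by decide +kernel) h))))
  · exact all (Or.inr (Or.inr (Or.inr (Or.inl (step u 5 hu (by decide +kernel) h)))))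
  · exact all (Or.inr (Or.inr (Or.inr (Or.inr (step u 6 hu (by decide +kernel) h)))))

/-- The bilinear expression of `A + TAT`. -/
lemma conj_expand (z : V2) (A : M2) (hA : A ∈ LieL) :
    A + Tm z * A * Tm z = vecMulVec z ((A *ᵥ z) ᵥ* Om2) + vecMulVec (A *ᵥ z) (z ᵥ* Om2)
      + br z (A *ᵥ z) • Nm z := by
  apply ext_mulVec; intro w
  rw [add_mulVec, add_mulVec, add_mulVec, ← mulVec_mulVec, ← mulVec_mulVec, Tm_mulVec, Tm_mulVec,
    vecMulVec_mulVec, vecMulVec_mulVec, ← dotProduct_mulVec, ← dotProduct_mulVec, smul_mulVec,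
    Nm_mulVec, mulVec_add, mulVec_smul, br_add_right, br_smul_right]
  change _ = MulOpposite.op (br (A *ᵥ z) w) • z + MulOpposite.op (br z w) • (A *ᵥ z) + _
  rw [br_symm (A *ᵥ z) w, hA w z]
  ext i
  have h := fun x : ZMod 2 => @char2 x
  simp
  linear_combination h ((A *ᵥ w) i)

/-- If a functional kills `S`, it is invariant under the first transvection. -/
lemma functional_inv (S : Submodule (ZMod 2) M2) (hSL : S ≤ LieL)
    (hc : ∀ k, ∀ A ∈ S, Tm (rootA k) * A * Tm (rootA k) ∈ S)
    (hb : ¬ ∀ m ∈ S, br (rootA 0) (m *ᵥ rootA 0) = 0)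
    (f : M2 →ₗ[ZMod 2] ZMod 2) (hf : ∀ m ∈ S, f m = 0) (A : M2) (hA : A ∈ LieL) :
    f (A + Tm (rootA 0) * A * Tm (rootA 0)) = 0 := by
  let z := rootA 0
  let lam : V2 →ₗ[ZMod 2] ZMod 2 := f ∘ₗ
    { toFun := fun y => vecMulVec z (y ᵥ* Om2) + vecMulVec y (z ᵥ* Om2) + br z y • Nm z
      map_add' := by
        intro x y
        simp only [add_vecMul, add_vecMulVec, vecMulVec_add, br_add_right, add_smul]; abel
      map_smul' := by
        intro c x
        simp only [smul_vecMul, smul_vecMulVec, vecMulVec_smul, br_smul_right, smul_add,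
          RingHom.id_apply, mul_smul] }
  have hlam : ∀ A ∈ LieL, f (A + Tm z * A * Tm z) = lam (A *ᵥ z) := by
    intro A hA
    rw [conj_expand z A hA]; rfl
  let u' : V2 := fun i => lam (Pi.single i 1)
  let u : V2 := Om2 *ᵥ u'
  have hu : ∀ y, lam y = br u y := by
    intro y
    have h1 : br u y = u' ⬝ᵥ y := by
      show (Om2 *ᵥ u') ⬝ᵥ (Om2 *ᵥ y) = _
      rw [dotProduct_mulVec, ← mulVec_transpose, Om2_T, mulVec_mulVec, Om2_sq, one_mulVec]
    rw [h1]
    rw [LinearMap.pi_apply_eq_sum_univ lam y]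
    simp only [dotProduct, u', smul_eq_mul]
    refine Finset.sum_congr rfl fun i _ => ?_
    rw [mul_comm]
    congr 2
    ext j
    simp [Pi.single_apply, eq_comm]
  rw [hlam A hA, hu]
  by_cases hne : u = 0
  · rw [hne]; simp [br]
  · exfalso
    apply hb
    refine U_lemma S hc u ?_ ?_ hne
    · intro m hm
      rw [← hu, ← hlam m (hSL hm), map_add, hf m hm, hf _ (hc 0 m hm), add_zero]
    · rw [← hu]
      show f (vecMulVec z (z ᵥ* Om2) + vecMulVec z (z ᵥ* Om2) + br z z • Nm z) = 0
      rw [mchar2, br_self]; simp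

/-- If `S` is not annihilated and contains some `N + A + TAT` then it contains `L`. -/
lemma L_le (S : Submodule (ZMod 2) M2) (hSL : S ≤ LieL)
    (hc : ∀ k, ∀ A ∈ S, Tm (rootA k) * A * Tm (rootA k) ∈ S)
    (hb : ¬ ∀ m ∈ S, br (rootA 0) (m *ᵥ rootA 0) = 0)
    (A : M2) (hA : A ∈ LieL) (hm : Nm (rootA 0) + (A + Tm (rootA 0) * A * Tm (rootA 0)) ∈ S) :
    ∀ v, Nm v ∈ S := by
  apply all_Nm S hc
  by_contra hn
  obtain ⟨f, hf1, hf2⟩ := Submodule.exists_le_ker_of_notMem hn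
  have hf : ∀ m ∈ S, f m = 0 := fun m hm => hf2 hm
  have := hf _ hm
  rw [map_add, functional_inv S hSL hc hb f hf A hA, add_zero] at this
  exact hf1 this

lemma V0_lemma (S : Submodule (ZMod 2) M2)
    (hc : ∀ k, ∀ A ∈ S, Tm (rootA k) * A * Tm (rootA k) ∈ S)
    (h0 : ∀ m ∈ S, br (rootA 0) (m *ᵥ rootA 0) = 0) :
    ∀ k, ∀ m ∈ S, br (rootA k) (m *ᵥ rootA k) = 0 := by
  let U : V2 → Prop := fun u => ∀ m ∈ S, br u (m *ᵥ u) = 0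
  have step : ∀ u k, U u → br (rootA k) u = 1 → U (u + rootA k) := by
    intro u k hU h1 m hm
    have h2 := hU _ (hc k m hm)
    rw [br_conj, Tm_mulVec, h1, one_smul] at h2
    exact h2
  have next : ∀ k k', br (rootA k') (rootA k) = 1 → br (rootA k) (rootA k + rootA k') = 1 →
      rootA k + rootA k' + rootA k = rootA k' → U (rootA k) → U (rootA k') := by
    intro k k' h1 h2 h3 h
    rw [← h3]
    exact step _ _ (step _ _ h h1) h2
  have r1 := next 0 1 (by decide +kernel) (by decide +kernel) (by decide +kernel) h0
  have r2 := next 1 2 (by decide +kernel) (by decide +kernel) (by decide +kernel) r1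
  have r3 := next 2 3 (by decide +kernel) (by decide +kernel) (by decide +kernel) r2
  have r4 := next 3 4 (by decide +kernel) (by decide +kernel) (by decide +kernel) r3
  have r5 := next 4 5 (by decide +kernel) (by decide +kernel) (by decide +kernel) r4
  have r6 := next 5 6 (by decide +kernel) (by decide +kernel) (by decide +kernel) r5
  intro k; fin_cases k
  exacts [h0, r1, r2, r3, r4, r5, r6]

lemma quad_add (A : M2) (hA : A ∈ LieL) (v w : V2) :
    br (v + w) (A *ᵥ (v + w)) = br v (A *ᵥ v) + br w (A *ᵥ w) := by
  rw [mulVec_add, br_add_left, br_add_right, br_add_right, hA w v]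
  linear_combination @char2 (br v (A *ᵥ w))

/-- The contradiction in part (b). -/
lemma b_contra (S : Submodule (ZMod 2) M2)
    (hc : ∀ k, ∀ A ∈ S, Tm (rootA k) * A * Tm (rootA k) ∈ S)
    (A : M2) (hA : A ∈ LieL) (hm : Nm (rootA 0) + (A + Tm (rootA 0) * A * Tm (rootA 0)) ∈ S)
    (hj : ∀ j : Fin 7, j = 2 ∨ j = 4 ∨ j = 6 → ∃ B : M2,
      (A + Tm (rootA j) * A * Tm (rootA j)) + (B + Tm (rootA 0) * B * Tm (rootA 0)) ∈ S) :
    ¬ ∀ m ∈ S, br (rootA 0) (m *ᵥ rootA 0) = 0 := by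
  intro h0
  have hV := V0_lemma S hc h0
  have h1 := hV 1 _ hm
  have e10 : br (rootA 0) (rootA 1) = 1 := by decide +kernel
  have ha0 : br (rootA 0) (A *ᵥ rootA 0) = 1 := by
    rw [add_mulVec, add_mulVec, br_add_right, br_add_right, br_conj, Tm_mulVec, e10, one_smul,
      quad_add A hA, Nm_mulVec, e10, one_smul, br_symm, e10] at h1
    have := @char2 (br (rootA 1) (A *ᵥ rootA 1))
    have h2 : (1 : ZMod 2) + 1 = 0 := rfl
    linear_combination h1 - this - h2
  have key : ∀ j l : Fin 7, (j = 2 ∨ j = 4 ∨ j = 6) → br (rootA 0) (rootA l) = 0 →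
      br (rootA j) (rootA l) = 1 → br (rootA j) (A *ᵥ rootA j) = 0 := by
    intro j l hjj h2 h3
    obtain ⟨B, hB⟩ := hj j hjj
    have h4 := hV l _ hB
    rw [add_mulVec, add_mulVec, add_mulVec, br_add_right, br_add_right, br_add_right, br_conj,
      br_conj, Tm_mulVec, Tm_mulVec, h2, h3, one_smul, zero_smul, add_zero, quad_add A hA] at h4
    have h5 := @char2 (br (rootA l) (A *ᵥ rootA l))
    have h6 := @char2 (br (rootA l) (B *ᵥ rootA l))
    linear_combination h4 - h5 - h6
  have k2 := key 2 3 (by decide) (by decide +kernel) (by decide +kernel)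
  have k4 := key 4 3 (by decide) (by decide +kernel) (by decide +kernel)
  have k6 := key 6 5 (by decide) (by decide +kernel) (by decide +kernel)
  have hs : rootA 0 = rootA 2 + rootA 4 + rootA 6 := by decide +kernel
  rw [hs, quad_add A hA, quad_add A hA, k2, k4, k6] at ha0
  revert ha0; decide

/-! ### Matrices over `ℤ/8` -/

lemma rd_apply (A : M8) (i j) : rd A i j = ZMod.castHom (show (2:ℕ) ∣ 2^3 by norm_num) (ZMod 2) (A i j) := rfl

lemma entry_half : ∀ a : ZMod (2^3), ZMod.castHom (show (2:ℕ) ∣ 2^3 by norm_num) (ZMod 2) a = 0 →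
    ∃ d, a = 2 * d := by decide +kernel

lemma entry_two : ∀ a b : ZMod (2^3), 2 * a = 4 * b →
    ZMod.castHom (show (2:ℕ) ∣ 2^3 by norm_num) (ZMod 2) a = 0 := by decide +kernel

lemma entry_four : ∀ a : ZMod (2^3), 4 * a = 0 →
    ZMod.castHom (show (2:ℕ) ∣ 2^3 by norm_num) (ZMod 2) a = 0 := by decide +kernel

lemma half (A : M8) (h : rd A = 0) : ∃ D : M8, A = (2 : ZMod (2^3)) • D := by
  have : ∀ i j, ∃ d, A i j = 2 * d := fun i j => entry_half _ (by
    have := congrFun (congrFun h i) j; exact this)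
  choose D hD using this
  exact ⟨D, by ext i j; exact hD i j⟩

lemma rd_two (A B : M8) (h : (2 : ZMod (2^3)) • A = (4 : ZMod (2^3)) • B) : rd A = 0 := by
  ext i j; exact entry_two _ (B i j) (congrFun (congrFun h i) j)

lemma rd_four (A : M8) (h : (4 : ZMod (2^3)) • A = 0) : rd A = 0 := by
  ext i j; exact entry_four _ (congrFun (congrFun h i) j)

lemma rd_smul (c : ZMod (2^3)) (A : M8) : rd (c • A) =
    ZMod.castHom (show (2:ℕ) ∣ 2^3 by norm_num) (ZMod 2) c • rd A := by
  ext i j; simp [rd_apply]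

lemma rd_smul_zero (c : ZMod (2^3))
    (hc : ZMod.castHom (show (2:ℕ) ∣ 2^3 by norm_num) (ZMod 2) c = 0) (A : M8) :
    rd (c • A) = 0 := by rw [rd_smul, hc, zero_smul]

lemma rd_Om : rd Om8 = Om2 := by decide +kernel
lemma rd_T (A : M8) : rd Aᵀ = (rd A)ᵀ := rfl

lemma cast_two : ZMod.castHom (show (2:ℕ) ∣ 2^3 by norm_num) (ZMod 2) 2 = 0 := by decide
lemma cast_four : ZMod.castHom (show (2:ℕ) ∣ 2^3 by norm_num) (ZMod 2) 4 = 0 := by decide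

lemma lie_of_sp2 (A : M8) (h : (1 + (2 : ZMod (2^3)) • A)ᵀ * Om8 * (1 + (2 : ZMod (2^3)) • A) = Om8) :
    rd A ∈ LieL := by
  apply LieL_of_mat
  rw [← rd_Om, ← rd_T, ← map_mul, ← map_mul, ← map_add]
  apply rd_two _ (-(Aᵀ * Om8 * A))
  have e : (1 + (2 : ZMod (2^3)) • A)ᵀ * Om8 * (1 + (2 : ZMod (2^3)) • A) =
      Om8 + (2 : ZMod (2^3)) • (Aᵀ * Om8 + Om8 * A) + (4 : ZMod (2^3)) • (Aᵀ * Om8 * A) := by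
    rw [transpose_add, transpose_one, transpose_smul]
    simp only [add_mul, mul_add, one_mul, mul_one, smul_mul_assoc, mul_smul_comm, smul_add,
      smul_smul]
    norm_num
    abel
  rw [e] at h
  rw [smul_neg, eq_neg_iff_add_eq_zero]
  rw [add_assoc] at h
  exact left_eq_add.mp h.symm

lemma lie_of_sp4 (A : M8) (h : (1 + (4 : ZMod (2^3)) • A)ᵀ * Om8 * (1 + (4 : ZMod (2^3)) • A) = Om8) :
    rd A ∈ LieL := by
  apply LieL_of_mat
  rw [← rd_Om, ← rd_T, ← map_mul, ← map_mul, ← map_add]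
  apply rd_four _
  have e : (1 + (4 : ZMod (2^3)) • A)ᵀ * Om8 * (1 + (4 : ZMod (2^3)) • A) =
      Om8 + (4 : ZMod (2^3)) • (Aᵀ * Om8 + Om8 * A) + (4 * 4 : ZMod (2^3)) • (Aᵀ * Om8 * A) := by
    rw [transpose_add, transpose_one, transpose_smul]
    simp only [add_mul, mul_add, one_mul, mul_one, smul_mul_assoc, mul_smul_comm, smul_add,
      smul_smul]
    abel
  have h16 : (4 * 4 : ZMod (2^3)) = 0 := by decide
  rw [e, h16, zero_smul, add_zero] at h
  exact left_eq_add.mp h.symm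

/-- Elements of the level-`c` part of `G`. -/
def lev (G : Subgroup (GL (Fin (2*3)) (ZMod (2^3)))) (c : ZMod (2^3))
    (hc : ZMod.castHom (show (2:ℕ) ∣ 2^3 by norm_num) (ZMod 2) c = 0) :
    Submodule (ZMod 2) M2 where
  carrier := {A | ∃ x ∈ G, ∃ A' : M8, (x : M8) = 1 + c • A' ∧ rd A' = A}
  zero_mem' := ⟨1, G.one_mem, 0, by simp, by simp⟩
  add_mem' := by
    rintro A B ⟨x, hx, A', hA, rfl⟩ ⟨y, hy, B', hB, rfl⟩
    refine ⟨x * y, G.mul_mem hx hy, A' + B' + c • (A' * B'), ?_, ?_⟩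
    · rw [Units.val_mul, hA, hB]
      simp only [add_mul, mul_add, one_mul, mul_one, smul_mul_assoc, mul_smul_comm, smul_add]
      abel
    · rw [map_add, map_add, rd_smul_zero c hc, add_zero]
  smul_mem' := by
    intro k A hA
    have : k = 0 ∨ k = 1 := by revert k; decide
    rcases this with rfl | rfl
    · rw [zero_smul]; exact ⟨1, G.one_mem, 0, by simp, by simp⟩
    · rwa [one_smul]

lemma mem_lev {G : Subgroup (GL (Fin (2*3)) (ZMod (2^3)))} {c : ZMod (2^3)}
    {hc : ZMod.castHom (show (2:ℕ) ∣ 2^3 by norm_num) (ZMod 2) c = 0} {A : M2} :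
    A ∈ lev G c hc ↔ ∃ x ∈ G, ∃ A' : M8, (x : M8) = 1 + c • A' ∧ rd A' = A := Iff.rfl

lemma rd_val (x : GL (Fin (2*3)) (ZMod (2^3))) : ((red82 x : GL (Fin (2*3)) (ZMod 2)) : M2) = rd (x : M8) := rfl

lemma rd_inv (x : GL (Fin (2*3)) (ZMod (2^3))) (T : M2) (hT : T * T = 1) (h : rd (x : M8) = T) :
    rd ((x⁻¹ : GL (Fin (2*3)) (ZMod (2^3))) : M8) = T := by
  have h1 : rd (x : M8) * rd ((x⁻¹ : GL (Fin (2*3)) (ZMod (2^3))) : M8) = 1 := by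
    rw [← map_mul, ← Units.val_mul, mul_inv_cancel]; simp
  rw [h] at h1
  calc rd ((x⁻¹ : GL (Fin (2*3)) (ZMod (2^3))) : M8)
      = T * T * rd ((x⁻¹ : GL (Fin (2*3)) (ZMod (2^3))) : M8) := by rw [hT, one_mul]
    _ = T := by rw [mul_assoc, h1, mul_one]

lemma lev_conj (G : Subgroup (GL (Fin (2*3)) (ZMod (2^3)))) (c : ZMod (2^3))
    (hc : ZMod.castHom (show (2:ℕ) ∣ 2^3 by norm_num) (ZMod 2) c = 0)
    (T : M2) (hT : T * T = 1) (g : GL (Fin (2*3)) (ZMod (2^3))) (hg : g ∈ G)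
    (h : rd (g : M8) = T) (A : M2) (hA : A ∈ lev G c hc) : T * A * T ∈ lev G c hc := by
  obtain ⟨x, hx, A', hA', rfl⟩ := hA
  refine ⟨g * x * g⁻¹, G.mul_mem (G.mul_mem hg hx) (G.inv_mem hg),
    (g : M8) * A' * ((g⁻¹ : GL (Fin (2*3)) (ZMod (2^3))) : M8), ?_, ?_⟩
  · rw [Units.val_mul, Units.val_mul, hA']
    have : (g : M8) * ((g⁻¹ : GL (Fin (2*3)) (ZMod (2^3))) : M8) = 1 := by
      rw [← Units.val_mul, mul_inv_cancel]; simp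
    rw [mul_add, mul_one, add_mul, this, mul_smul_comm, smul_mul_assoc]
  · rw [map_mul, map_mul, h, rd_inv g T hT h]

lemma rd_Tm : ∀ k, rd (Tm (rootB k)) = Tm (rootA k) := by decide +kernel
lemma rd_Nm : ∀ k, rd (Nm (rootB k)) = Nm (rootA k) := by decide +kernel
lemma NmB_sq : ∀ k, Nm (rootB k) * Nm (rootB k) = 0 := by decide +kernel
lemma TmB_sp : ∀ k, (Tm (rootB k))ᵀ * Om8 * Tm (rootB k) = Om8 := by decide +kernel
lemma TmB_comm : ∀ j : Fin 7, j = 2 ∨ j = 4 ∨ j = 6 →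
    Tm (rootB 0) * Tm (rootB j) = Tm (rootB j) * Tm (rootB 0) := by decide +kernel

lemma sp_cancel {X W Y : M8} (h : X * W = Y) (hX : Xᵀ * Om8 * X = Om8) (hY : Yᵀ * Om8 * Y = Om8) :
    Wᵀ * Om8 * W = Om8 := by
  calc Wᵀ * Om8 * W = Wᵀ * (Xᵀ * Om8 * X) * W := by rw [hX]
    _ = (X * W)ᵀ * Om8 * (X * W) := by rw [transpose_mul]; simp only [mul_assoc]
    _ = Om8 := by rw [h, hY]

/-- Decompose a lift of a transvection. -/
lemma decomp (k : Fin 7) (X : M8) (h : rd X = Tm (rootA k)) :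
    ∃ A : M8, X = Tm (rootB k) * (1 + (2 : ZMod (2^3)) • A) := by
  have hinv : Tm (rootB k) * (1 - Nm (rootB k)) = 1 := by
    have := NmB_sq k
    calc Tm (rootB k) * (1 - Nm (rootB k)) = 1 - Nm (rootB k) * Nm (rootB k) := by
          rw [Tm]; noncomm_ring
      _ = 1 := by rw [this, sub_zero]
  have h2 : rd ((1 - Nm (rootB k)) * X - 1) = 0 := by
    rw [map_sub, map_mul, map_sub, map_one, rd_Nm, h]
    have : (1 : M2) - Nm (rootA k) = Tm (rootA k) := by
      rw [Tm, sub_eq_iff_eq_add, add_assoc, mchar2, add_zero]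
    rw [this, Tm_sq, sub_self]
  obtain ⟨A, hA⟩ := half _ h2
  refine ⟨A, ?_⟩
  rw [← hA, add_sub_cancel, ← mul_assoc, hinv, one_mul]

lemma square_part (A : M8) (N : M8) (hN : N * N = 0) :
    ((1 + N) * (1 + (2 : ZMod (2^3)) • A)) * ((1 + N) * (1 + (2 : ZMod (2^3)) • A)) =
    1 + (2 : ZMod (2^3)) • (N + (1 + N) * A * (1 + N) + A +
      (2 : ZMod (2^3)) • ((N + (1 + N) * A * (1 + N)) * A)) := by
  have e1 : (1 + N) * (1 + N) = 1 + (2 : ZMod (2^3)) • N := by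
    have : (1 + N) * (1 + N) = 1 + (N + N) + N * N := by noncomm_ring
    rw [this, hN, add_zero, two_smul]
  have e2 : (1 + N) * (1 + (2 : ZMod (2^3)) • A) * (1 + N) =
      1 + (2 : ZMod (2^3)) • (N + (1 + N) * A * (1 + N)) := by
    generalize 1 + N = P at *
    rw [mul_add, mul_one, add_mul, e1, mul_smul_comm, smul_mul_assoc, smul_add, add_assoc]
  rw [← mul_assoc, e2]
  generalize N + (1 + N) * A * (1 + N) = Z
  rw [add_mul, one_mul, mul_add, mul_one, smul_mul_assoc, mul_smul_comm, smul_add, smul_add]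
  abel

lemma comm_part (P Q : M8) (hPQ : P * Q = Q * P) (hP : rd P * rd P = 1) (hQ : rd Q * rd Q = 1)
    (A B m : M8)
    (h : (P * (1 + (2 : ZMod (2^3)) • A)) * (Q * (1 + (2 : ZMod (2^3)) • B)) =
      (Q * (1 + (2 : ZMod (2^3)) • B)) * (P * (1 + (2 : ZMod (2^3)) • A)) *
        (1 + (2 : ZMod (2^3)) • m)) :
    rd m = (rd A + rd Q * rd A * rd Q) + (rd B + rd P * rd B * rd P) := by
  have h4 : (4 : ZMod (2^3)) = 2 * 2 := by decide
  have key : rd (P * A * Q + P * Q * B - (Q * B * P + Q * P * A + Q * P * m)) = 0 := by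
    apply rd_two _ (Q * B * P * A + (Q * B * P + Q * P * A) * m
      + (2 : ZMod (2^3)) • (Q * B * P * A * m) - P * A * Q * B)
    rw [h4]
    rw [← sub_eq_zero] at h ⊢
    rw [← h]
    simp only [mul_add, add_mul, mul_one, smul_mul_assoc, mul_smul_comm, smul_add,
      smul_smul, smul_sub, hPQ, ← mul_assoc]
    abel
  rw [map_sub, sub_eq_zero] at key
  simp only [map_add, map_mul] at key
  have hc : rd P * rd Q = rd Q * rd P := by rw [← map_mul, hPQ, map_mul]
  generalize rd P = p at *
  generalize rd Q = q at *
  generalize rd A = a at *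
  generalize rd B = b at *
  generalize rd m = n at *
  have e1 : p * q * (p * a * q + p * q * b) = q * a * q + b := by
    have i1 : p * q * (p * a * q) = q * a * q := by
      rw [hc]
      calc q * p * (p * a * q) = q * (p * p) * a * q := by simp only [mul_assoc]
        _ = _ := by rw [hP, mul_one]
    have i2 : p * q * (p * q * b) = b := by
      calc p * q * (p * q * b) = p * q * (q * p * b) := by rw [hc]
        _ = p * (q * q) * p * b := by simp only [mul_assoc]
        _ = b := by rw [hQ, mul_one, hP, one_mul]
    rw [mul_add, i1, i2]
  have e2 : p * q * (q * b * p + q * p * a + q * p * n) = p * b * p + a + n := by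
    have i1 : ∀ c, p * q * (q * c) = p * c := by
      intro c
      calc p * q * (q * c) = p * (q * q) * c := by simp only [mul_assoc]
        _ = _ := by rw [hQ, mul_one]
    have i2 : ∀ c, p * (p * c) = c := by intro c; rw [← mul_assoc, hP, one_mul]
    simp only [mul_add, mul_assoc] at *
    simp only [i1, i2]
  rw [key, e2] at e1
  calc n = (p * b * p + a + n) + (p * b * p + a) := by
        have := mchar2 (p * b * p + a)
        rw [add_right_comm, this, zero_add]
    _ = _ := by rw [e1]; abel

end MM15


open MM15

/-- No proper subgroup of `S̃_8(8) ⊆ Sp_6(ℤ/8ℤ)` has mod-2 image equal to the full embedded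
`S_8 ⊆ Sp_6(ℤ/2ℤ)`: every subgroup `G ⊆ S̃_8(8)` whose mod-2 image equals the embedded `S_8`
satisfies `G = S̃_8(8)`. -/
theorem maximal_monodromy_stmt15
    (G : Subgroup (GL (Fin (2*3)) (ZMod (2^3))))
    (hsub : (G : Set (GL (Fin (2*3)) (ZMod (2^3)))) ⊆ StildeMod8Set)
    (himg : ∀ B : GL (Fin (2*3)) (ZMod 2),
      (∃ σ : Equiv.Perm (Fin (2*3+2)),
        representsPerm 3 (B : Matrix (Fin (2*3)) (Fin (2*3)) (ZMod 2)) σ)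
      ↔ B ∈ Subgroup.map red82 G) :
    (G : Set (GL (Fin (2*3)) (ZMod (2^3)))) = StildeMod8Set := by
  have hgen : ∀ k : Fin 7, ∃ x ∈ G, rd (x : M8) = Tm (rootA k) := by
    intro k
    let B : GL (Fin (2*3)) (ZMod 2) := ⟨Tm (rootA k), Tm (rootA k), Tm_sq _, Tm_sq _⟩
    obtain ⟨x, hx, hxB⟩ := (himg B).mp ⟨_, represents k⟩
    refine ⟨x, hx, ?_⟩
    rw [← rd_val, hxB]
  have hsp : ∀ x ∈ G, (x : M8)ᵀ * Om8 * (x : M8) = Om8 := fun x hx => (hsub hx).1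
  let S : Submodule (ZMod 2) M2 := lev G 2 cast_two
  have hc : ∀ k, ∀ A ∈ S, Tm (rootA k) * A * Tm (rootA k) ∈ S := by
    intro k A hA
    obtain ⟨g, hg, hgk⟩ := hgen k
    exact lev_conj G 2 cast_two _ (Tm_sq _) g hg hgk A hA
  have hSL : S ≤ LieL := by
    rintro A ⟨x, hx, A', hA', rfl⟩
    apply lie_of_sp2
    rw [← hA']; exact hsp x hx
  obtain ⟨x0, hx0, hr0⟩ := hgen 0
  obtain ⟨A, hA⟩ := decomp 0 _ hr0
  have hAL : rd A ∈ LieL := by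
    apply lie_of_sp2
    exact sp_cancel hA.symm (TmB_sp 0) (hsp x0 hx0)
  have hm : Nm (rootA 0) + (rd A + Tm (rootA 0) * rd A * Tm (rootA 0)) ∈ S := by
    refine ⟨x0 * x0, G.mul_mem hx0 hx0, Nm (rootB 0) + Tm (rootB 0) * A * Tm (rootB 0) + A +
      (2 : ZMod (2^3)) • ((Nm (rootB 0) + Tm (rootB 0) * A * Tm (rootB 0)) * A), ?_, ?_⟩
    · rw [Units.val_mul, hA]
      exact square_part A _ (NmB_sq 0)
    · rw [map_add, map_add, map_add, rd_smul_zero _ cast_two, map_mul, map_mul, add_zero]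
      rw [rd_Nm, rd_Tm]; abel
  have hj : ∀ j : Fin 7, j = 2 ∨ j = 4 ∨ j = 6 → ∃ B : M2,
      (rd A + Tm (rootA j) * rd A * Tm (rootA j)) + (B + Tm (rootA 0) * B * Tm (rootA 0)) ∈ S := by
    intro j hj
    obtain ⟨y, hy, hry⟩ := hgen j
    obtain ⟨B, hB⟩ := decomp j _ hry
    refine ⟨rd B, ?_⟩
    let w : GL (Fin (2*3)) (ZMod (2^3)) := x0⁻¹ * y⁻¹ * x0 * y
    have hw : w ∈ G := G.mul_mem (G.mul_mem (G.mul_mem (G.inv_mem hx0) (G.inv_mem hy)) hx0) hy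
    have hcomm : Tm (rootA 0) * Tm (rootA j) = Tm (rootA j) * Tm (rootA 0) := by
      rw [← rd_Tm, ← rd_Tm, ← map_mul, TmB_comm j hj, map_mul]
    have hrw : rd ((w : M8) - 1) = 0 := by
      rw [map_sub, map_one, Units.val_mul, Units.val_mul, Units.val_mul, map_mul, map_mul, map_mul,
        rd_inv x0 _ (Tm_sq _) hr0, rd_inv y _ (Tm_sq _) hry, hr0, hry, mul_assoc, hcomm]
      rw [mul_assoc, ← mul_assoc (Tm (rootA 0)) (Tm (rootA j)), hcomm, mul_assoc, Tm_sq, mul_one,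
        Tm_sq, sub_self]
    obtain ⟨m, hmm⟩ := half _ hrw
    have hwm : (w : M8) = 1 + (2 : ZMod (2^3)) • m := by rw [← hmm]; abel
    have hxy : (x0 : M8) * (y : M8) = (y : M8) * (x0 : M8) * (w : M8) := by
      rw [← Units.val_mul, ← Units.val_mul, ← Units.val_mul]
      congr 1
      simp only [w]; group
    rw [hwm, hA, hB] at hxy
    have hfin := comm_part _ _ (TmB_comm j hj) (by rw [rd_Tm, Tm_sq]) (by rw [rd_Tm, Tm_sq]) A B m hxy
    rw [rd_Tm, rd_Tm] at hfin
    exact ⟨w, hw, m, hwm, hfin⟩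
  have hb := b_contra S hc (rd A) hAL hm hj
  have hN := L_le S hSL hc hb (rd A) hAL hm
  have hLS := LieL_le S hN
  have hN4 : ∀ v, Nm v ∈ lev G 4 cast_four := by
    intro v
    obtain ⟨x, hx, A', hA', hrA⟩ := hN v
    refine ⟨x * x, G.mul_mem hx hx, A' + A' * A', ?_, ?_⟩
    · have h4 : (4 : ZMod (2^3)) = 2 * 2 := by decide
      have h22 : ∀ Z : M8, (2 : ZMod (2^3)) • Z + (2 : ZMod (2^3)) • Z = (2 * 2 : ZMod (2^3)) • Z := by
        intro Z; rw [← add_smul]; congr 1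
      rw [Units.val_mul, hA', h4]
      simp only [mul_add, add_mul, mul_one, one_mul, smul_mul_assoc, mul_smul_comm, smul_add,
        smul_smul, ← h22 A']
      abel
    · rw [map_add, map_mul, hrA, Nm_sq, add_zero]
  have hLS4 := LieL_le _ hN4
  refine Set.Subset.antisymm hsub ?_
  rintro y ⟨hy, σ, hσ⟩
  obtain ⟨x, hx, hxy⟩ := (himg (red82 y)).mp ⟨σ, hσ⟩
  have hw1 : ((x : M8)) * ((x⁻¹ * y : GL (Fin (2*3)) (ZMod (2^3))) : M8) = y := by
    rw [← Units.val_mul, mul_inv_cancel_left]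
  have hw1sp := sp_cancel hw1 (hsp x hx) hy
  have hw1r : rd (((x⁻¹ * y : GL (Fin (2*3)) (ZMod (2^3))) : M8) - 1) = 0 := by
    have : red82 (x⁻¹ * y) = 1 := by rw [map_mul, map_inv, hxy, inv_mul_cancel]
    rw [map_sub, map_one, ← rd_val, this]; simp
  obtain ⟨C, hC⟩ := half _ hw1r
  have hC' : ((x⁻¹ * y : GL (Fin (2*3)) (ZMod (2^3))) : M8) = 1 + (2 : ZMod (2^3)) • C := by
    rw [← hC]; abel
  have hCL : rd C ∈ LieL := by
    apply lie_of_sp2; rw [← hC']; exact hw1sp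
  obtain ⟨x2, hx2, C2, hC2, hrC2⟩ := hLS hCL
  obtain ⟨D, hD⟩ := half (C - C2) (by rw [map_sub, hrC2, sub_self])
  have hw2 : (x2 : M8) * ((x2⁻¹ * (x⁻¹ * y) : GL (Fin (2*3)) (ZMod (2^3))) : M8) =
      ((x⁻¹ * y : GL (Fin (2*3)) (ZMod (2^3))) : M8) := by
    rw [← Units.val_mul, mul_inv_cancel_left]
  have hw2sp := sp_cancel hw2 (hsp x2 hx2) hw1sp
  have hE : ((x2⁻¹ * (x⁻¹ * y) : GL (Fin (2*3)) (ZMod (2^3))) : M8) =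
      1 + (4 : ZMod (2^3)) • (((x2⁻¹ : GL (Fin (2*3)) (ZMod (2^3))) : M8) * D) := by
    have h4 : (4 : ZMod (2^3)) = 2 * 2 := by decide
    have hi : ((x2⁻¹ : GL (Fin (2*3)) (ZMod (2^3))) : M8) * (x2 : M8) = 1 := by
      rw [← Units.val_mul, inv_mul_cancel]; simp
    have e : ((x⁻¹ * y : GL (Fin (2*3)) (ZMod (2^3))) : M8) = (x2 : M8) + (4 : ZMod (2^3)) • D := by
      rw [h4, mul_smul, ← hD, hC', hC2, smul_sub]; abel
    rw [Units.val_mul, e, mul_add, hi, mul_smul_comm]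
  have hEL : rd (((x2⁻¹ : GL (Fin (2*3)) (ZMod (2^3))) : M8) * D) ∈ LieL := by
    apply lie_of_sp4; rw [← hE]; exact hw2sp
  obtain ⟨x3, hx3, C3, hC3, hrC3⟩ := hLS4 hEL
  have h3 : x3 = x2⁻¹ * (x⁻¹ * y) := by
    apply Units.ext
    rw [hC3, hE]
    obtain ⟨F, hF⟩ := half (C3 - ((x2⁻¹ : GL (Fin (2*3)) (ZMod (2^3))) : M8) * D)
      (by rw [map_sub, hrC3, sub_self])
    have h8 : (4 * 2 : ZMod (2^3)) = 0 := by decide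
    rw [sub_eq_iff_eq_add.mp hF, smul_add, smul_smul, h8, zero_smul, zero_add]
  have hy' : y = x * (x2 * x3) := by rw [h3]; group
  rw [hy']
  exact G.mul_mem hx (G.mul_mem hx2 hx3)
end

section
/- Let g ≥ 2 and let ℓ ≥ 3 be a prime. Let H ⊆ GSp_{2g}(ℤ/ℓℤ) be a subgroup such that: (A) H contains a transvection, i.e., a nonidentity element of determinant 1 that fixes pointwise some codimension-1 subspace of (ℤ/ℓℤ)^{2g}; (B) the action of H on (ℤ/ℓℤ)^{2g} is irreducible, i.e., there is no H-invariant subspace other than 0 and the whole space; and (C) the action of H on (ℤ/ℓℤ)^{2g} is primitive, i.e., there is no direct-sum decomposition (ℤ/ℓℤ)^{2g} = V_1 ⊕ ⋯ ⊕ V_k into k ≥ 2 nonzero subspaces which are permuted by the action of H. Then H contains Sp_{2g}(ℤ/ℓℤ). -/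
open Matrix

namespace Monod

variable {F V : Type} [Field F] [AddCommGroup V] [Module F V]

/-- the abstract combinatorial properties of the set of transvection directions -/
structure Good (ω : V →ₗ[F] V →ₗ[F] F) (S : Set V) : Prop where
  two : (2 : F) ≠ 0
  alt : ∀ x, ω x x = 0
  nondeg : ∀ x, (∀ y, ω x y = 0) → x = 0
  nz : ∀ x ∈ S, x ≠ 0
  smul : ∀ x ∈ S, ∀ a : F, a ≠ 0 → a • x ∈ S
  add : ∀ x ∈ S, ∀ y ∈ S, ω x y ≠ 0 → ∀ a : F, x + a • y ∈ S
  span : Submodule.span F S = ⊤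

variable {ω : V →ₗ[F] V →ₗ[F] F} {S : Set V}

theorem skew (alt : ∀ x, ω x x = 0) (x y : V) : ω x y = - ω y x := by
  have h := alt (x + y)
  simp only [map_add, LinearMap.add_apply, alt] at h
  linear_combination h

theorem Good.sk (hS : Good ω S) (x y : V) : ω x y = - ω y x := skew hS.alt x y

theorem Good.sk0 (hS : Good ω S) {x y : V} (h : ω x y ≠ 0) : ω y x ≠ 0 := by
  rw [hS.sk]; exact neg_ne_zero.mpr h

theorem Good.zero_of_orth (hS : Good ω S) (x : V) (h : ∀ s ∈ S, ω x s = 0) : x = 0 := by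
  apply hS.nondeg
  intro y
  have hy : y ∈ Submodule.span F S := by rw [hS.span]; trivial
  induction hy using Submodule.span_induction with
  | mem y hy => exact h y hy
  | zero => simp
  | add a b _ _ ha hb => simp [ha, hb]
  | smul c a _ ha => simp [ha]

theorem Good.exists_nbr (hS : Good ω S) (x : V) (hx : x ≠ 0) : ∃ s ∈ S, ω x s ≠ 0 := by
  by_contra! h
  exact hx (hS.zero_of_orth x h)

/-- sum with a common neighbour nonorthogonal to the sum -/
theorem Good.sum1 (hS : Good ω S) {u v w : V} (hu : u ∈ S) (hv : v ∈ S) (hw : w ∈ S)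
    (h1 : ω u w ≠ 0) (h2 : ω v w ≠ 0) (h3 : ω (u + v) w ≠ 0) : u + v ∈ S := by
  by_cases huv : ω u v = 0
  · have a1 : u + (1 : F) • w ∈ S := hS.add u hu w hw h1 1
    have a2 : (u + (1 : F) • w) + (1 : F) • v ∈ S := by
      apply hS.add _ a1 _ hv
      simpa [huv] using hS.sk0 h2
    have a3 := hS.add _ a2 w hw (by
      simpa [hS.alt] using h3) (-1)
    convert a3 using 1
    module
  · simpa using hS.add u hu v hv huv 1

/-- asymmetric half of the degenerate case -/
theorem Good.sum2 (hS : Good ω S) {u v w z : V} (hu : u ∈ S) (hv : v ∈ S) (hw : w ∈ S)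
    (hz : z ∈ S)
    (h1 : ω u w ≠ 0) (h2 : ω v w ≠ 0) (h3 : ω (u + v) w = 0) (h4 : ω u z ≠ 0)
    (h5 : ω v z = 0) : u + v ∈ S := by
  by_cases huv : ω u v = 0
  swap
  · simpa using hS.add u hu v hv huv 1
  -- first arrange `ω w z ≠ 0`
  obtain ⟨w', hw', e1, e2, e3⟩ : ∃ w' ∈ S, ω u w' = ω u w ∧ ω v w' = ω v w ∧ ω w' z ≠ 0 := by
    by_cases hwz : ω w z = 0
    · refine ⟨w + (1 : F) • u, hS.add w hw u hu (hS.sk0 h1) 1, ?_, ?_, ?_⟩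
      · simp [hS.alt]
      · simp [hS.sk v u, huv]
      · simpa [hwz] using h4
    · exact ⟨w, hw, rfl, rfl, hwz⟩
  obtain ⟨c, hc, hc'⟩ : ∃ c : F, c ≠ 0 ∧ ω u w' + c * ω u z ≠ 0 := by
    by_cases h : ω u w' + 1 * ω u z = 0
    · refine ⟨-1, by simp, ?_⟩
      intro h'
      have : (2 : F) * ω u z = 0 := by linear_combination h - h'
      simp [hS.two, h4] at this
    · exact ⟨1, one_ne_zero, h⟩
  have hn : w' + c • z ∈ S := hS.add w' hw' z hz e3 c
  apply hS.sum1 hu hv hn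
  · simpa using hc'
  · simpa [h5, e2] using h2
  · simp only [map_add, LinearMap.add_apply, map_smul, smul_eq_mul, h5] at h3 ⊢
    rw [e1, e2]
    intro h
    have : c * ω u z = 0 := by linear_combination h - h3
    simp [hc, h4] at this

theorem Good.sum (hS : Good ω S) {u v w : V} (hu : u ∈ S) (hv : v ∈ S) (hw : w ∈ S)
    (h1 : ω u w ≠ 0) (h2 : ω v w ≠ 0) (h0 : u + v ≠ 0) : u + v ∈ S := by
  by_cases h3 : ω (u + v) w = 0
  · obtain ⟨z, hz, h⟩ := hS.exists_nbr _ h0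
    by_cases a : ω u z = 0
    · by_cases b : ω v z = 0
      · simp [a, b] at h
      · rw [add_comm] at h3 ⊢
        exact hS.sum2 hv hu hw hz h2 h1 h3 b a
    · by_cases b : ω v z = 0
      · exact hS.sum2 hu hv hw hz h1 h2 h3 a b
      · exact hS.sum1 hu hv hz a b h
  · exact hS.sum1 hu hv hw h1 h2 h3

/-- having a common neighbour -/
def Rel (ω : V →ₗ[F] V →ₗ[F] F) (S : Set V) (u v : V) : Prop :=
  ∃ w ∈ S, ω u w ≠ 0 ∧ ω v w ≠ 0

theorem Rel.symm {u v : V} (h : Rel ω S u v) : Rel ω S v u := by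
  obtain ⟨w, hw, a, b⟩ := h
  exact ⟨w, hw, b, a⟩

theorem Good.refl (hS : Good ω S) {u : V} (hu : u ∈ S) : Rel ω S u u := by
  obtain ⟨w, hw, h⟩ := hS.exists_nbr u (hS.nz u hu)
  exact ⟨w, hw, h, h⟩

theorem Good.path3 (hS : Good ω S) {u w₁ w₂ v : V} (hw1 : w₁ ∈ S) (hw2 : w₂ ∈ S)
    (a : ω u w₁ ≠ 0) (b : ω w₁ w₂ ≠ 0) (c : ω v w₂ ≠ 0) : Rel ω S u v := by
  by_cases h1 : ω u w₂ = 0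
  · by_cases h2 : ω v w₁ = 0
    · refine ⟨w₁ + (1 : F) • w₂, hS.add _ hw1 _ hw2 b 1, ?_, ?_⟩
      · simpa [h1] using a
      · simpa [h2] using c
    · exact ⟨w₁, hw1, a, h2⟩
  · exact ⟨w₂, hw2, h1, c⟩

theorem Good.trans (hS : Good ω S) {u v t : V} (hv : v ∈ S)
    (h : Rel ω S u v) (h' : Rel ω S v t) : Rel ω S u t := by
  obtain ⟨w, hw, a, b⟩ := h
  obtain ⟨w', hw', a', b'⟩ := h'
  obtain ⟨x, hx, c, d⟩ := hS.path3 (u := u) (v := w') hw hv a (hS.sk0 b) (hS.sk0 a')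
  exact hS.path3 hx hw' c (hS.sk0 d) b'

theorem Good.adj (hS : Good ω S) {u v : V} (hu : u ∈ S) (hv : v ∈ S) (h : ω u v ≠ 0) :
    Rel ω S u v := by
  refine ⟨u + (1 : F) • v, hS.add _ hu _ hv h 1, ?_, ?_⟩
  · simpa [hS.alt] using h
  · simpa [hS.alt] using hS.sk0 h

theorem Good.all (hS : Good ω S) (h : ∀ u ∈ S, ∀ v ∈ S, Rel ω S u v) (x : V) (hx : x ≠ 0) :
    x ∈ S := by
  have hy : x ∈ Submodule.span F S := by rw [hS.span]; trivial
  suffices x = 0 ∨ x ∈ S by tauto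
  clear hx
  induction hy using Submodule.span_induction with
  | mem y hy => exact Or.inr hy
  | zero => simp
  | add a b _ _ ha hb =>
    rcases ha with rfl | ha
    · simpa using hb
    rcases hb with rfl | hb
    · simpa using Or.inr ha
    by_cases h0 : a + b = 0
    · exact Or.inl h0
    · obtain ⟨w, hw, p, q⟩ := h a ha b hb
      exact Or.inr (hS.sum ha hb hw p q h0)
  | smul c a _ ha =>
    rcases ha with rfl | ha
    · simp
    by_cases hc : c = 0
    · simp [hc]
    · exact Or.inr (hS.smul a ha c hc)

/-- span of a class -/
def cls (ω : V →ₗ[F] V →ₗ[F] F) (S : Set V) (u : V) : Submodule F V :=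
  Submodule.span F {x | x ∈ S ∧ Rel ω S u x}

theorem Good.cls_eq (hS : Good ω S) {u v : V} (hu : u ∈ S) (hv : v ∈ S) (h : Rel ω S u v) :
    cls ω S u = cls ω S v := by
  unfold cls
  congr 1
  ext x
  exact ⟨fun k => ⟨k.1, hS.trans hu h.symm k.2⟩, fun k => ⟨k.1, hS.trans hv h k.2⟩⟩

theorem Good.cls_mem (hS : Good ω S) {u : V} (hu : u ∈ S) : u ∈ cls ω S u :=
  Submodule.subset_span ⟨hu, hS.refl hu⟩

theorem Good.cls_orth (hS : Good ω S) {u v x : V} (hv : v ∈ S)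
    (h : ¬ Rel ω S u v) (hx : x ∈ cls ω S u) : ω x v = 0 := by
  unfold cls at hx
  induction hx using Submodule.span_induction with
  | mem y hy =>
    by_contra hne
    exact h (hS.trans hy.1 hy.2 (hS.adj hy.1 hv hne))
  | zero => simp
  | add a b _ _ ha hb => simp [ha, hb]
  | smul c a _ ha => simp [ha]

theorem Good.indep (hS : Good ω S) :
    iSupIndep (fun W : (cls ω S '' S) => (W : Submodule F V)) := by
  rintro ⟨W, u, hu, rfl⟩
  rw [Submodule.disjoint_def]
  intro x hx hx'
  apply hS.zero_of_orth
  intro s hs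
  by_cases h : Rel ω S u s
  · have key : (⨆ j, ⨆ (_ : j ≠ (⟨cls ω S u, u, hu, rfl⟩ : (cls ω S '' S))),
        (j : Submodule F V)) ≤ LinearMap.ker (ω.flip s) := by
      refine iSup₂_le ?_
      rintro ⟨W, v, hv, rfl⟩ hne y hy
      rw [LinearMap.mem_ker, LinearMap.flip_apply]
      apply hS.cls_orth hs _ hy
      intro hr
      apply hne
      apply Subtype.ext
      exact (hS.cls_eq hv hs hr).trans (hS.cls_eq hu hs h).symm
    exact key hx'
  · exact hS.cls_orth hs h hx

theorem Good.isup (hS : Good ω S) : (⨆ W : (cls ω S '' S), (W : Submodule F V)) = ⊤ := by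
  rw [eq_top_iff, ← hS.span, Submodule.span_le]
  intro u hu
  exact (le_iSup (fun W : (cls ω S '' S) => (W : Submodule F V)) ⟨_, u, hu, rfl⟩) (hS.cls_mem hu)

theorem Good.map_cls (_hS : Good ω S) (f f' : V →ₗ[F] V) (hff' : ∀ x, f (f' x) = x)
    (hf : ∀ s ∈ S, f s ∈ S) (hf' : ∀ s ∈ S, f' s ∈ S) (m : F) (hm : m ≠ 0)
    (hω : ∀ x y, ω (f x) (f y) = m * ω x y) (u : V) :
    (cls ω S u).map f = cls ω S (f u) := by
  unfold cls
  rw [Submodule.map_span]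
  congr 1
  ext x
  constructor
  · rintro ⟨y, ⟨hy, w, hw, a, b⟩, rfl⟩
    exact ⟨hf y hy, f w, hf w hw, by simp [hω, hm, a], by simp [hω, hm, b]⟩
  · rintro ⟨hx, w, hw, a, b⟩
    refine ⟨f' x, ⟨hf' x hx, f' w, hf' w hw, ?_, ?_⟩, hff' x⟩
    · rw [← hff' w, hω] at a
      exact right_ne_zero_of_mul a
    · rw [← hff' w, ← hff' x, hω] at b
      exact right_ne_zero_of_mul b

variable {G : Type} [Group G] (ρ : G →* Module.End F V) (H : Subgroup G)

theorem rho_inv_right (h : G) (x : V) : ρ h (ρ h⁻¹ x) = x := by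
  rw [← Module.End.mul_apply, ← map_mul]; simp

theorem rho_inv_left (h : G) (x : V) : ρ h⁻¹ (ρ h x) = x := by
  rw [← Module.End.mul_apply, ← map_mul]; simp

/-- the directions of transvections in `H` -/
def dirs (ω : V →ₗ[F] V →ₗ[F] F) : Set V :=
  {v | v ≠ 0 ∧ ∀ c : F, ∃ h ∈ H, ∀ x, ρ h x = x + (c * ω x v) • v}

variable {ρ H}

theorem dirs_stable (sim : ∀ h ∈ H, ∃ m : F, m ≠ 0 ∧ ∀ x y, ω (ρ h x) (ρ h y) = m * ω x y)
    (h : G) (hh : h ∈ H) (v : V) (hv : v ∈ dirs ρ H ω) : ρ h v ∈ dirs ρ H ω := by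
  obtain ⟨hv0, hv⟩ := hv
  obtain ⟨m, hm, hω⟩ := sim h hh
  refine ⟨?_, fun c => ?_⟩
  · intro h0
    apply hv0
    rw [← rho_inv_left ρ h v, h0, map_zero]
  · obtain ⟨t, ht, htx⟩ := hv (c * m)
    refine ⟨h * t * h⁻¹, H.mul_mem (H.mul_mem hh ht) (H.inv_mem hh), fun x => ?_⟩
    rw [map_mul, map_mul, Module.End.mul_apply, Module.End.mul_apply, htx, map_add, map_smul,
      rho_inv_right]
    congr 2
    conv_rhs => rw [← rho_inv_right ρ h x, hω]
    ring

theorem dirs_good (two : (2 : F) ≠ 0) (alt : ∀ x, ω x x = 0)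
    (nondeg : ∀ x, (∀ y, ω x y = 0) → x = 0)
    (sim : ∀ h ∈ H, ∃ m : F, m ≠ 0 ∧ ∀ x y, ω (ρ h x) (ρ h y) = m * ω x y)
    (irr : ∀ W : Submodule F V, (∀ h ∈ H, ∀ v ∈ W, ρ h v ∈ W) → W = ⊥ ∨ W = ⊤)
    (ne : ∃ v, v ∈ dirs ρ H ω) : Good ω (dirs ρ H ω) where
  two := two
  alt := alt
  nondeg := nondeg
  nz := fun x hx => hx.1
  smul := by
    intro x hx a ha
    refine ⟨smul_ne_zero ha hx.1, fun c => ?_⟩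
    obtain ⟨h, hh, hx⟩ := hx.2 (a ^ 2 * c)
    refine ⟨h, hh, fun y => ?_⟩
    rw [hx, smul_smul, map_smul, smul_eq_mul]
    congr 2
    ring
  add := by
    intro x hx y hy hxy a
    obtain ⟨h, hh, hy⟩ := hy.2 (a / ω x y)
    have := dirs_stable sim h hh x hx
    rwa [hy, div_mul_cancel₀ _ hxy] at this
  span := by
    obtain ⟨v, hv⟩ := ne
    refine (irr (Submodule.span F (dirs ρ H ω)) ?_).resolve_left ?_
    · intro h hh v hv
      induction hv using Submodule.span_induction with
      | mem y hy => exact Submodule.subset_span (dirs_stable sim h hh y hy)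
      | zero => simp
      | add a b _ _ ha hb => rw [map_add]; exact Submodule.add_mem _ ha hb
      | smul c a _ ha => rw [map_smul]; exact Submodule.smul_mem _ _ ha
    · intro h0
      have : v ∈ Submodule.span F (dirs ρ H ω) := Submodule.subset_span hv
      rw [h0, Submodule.mem_bot] at this
      exact hv.1 this

theorem dirs_all [Finite V] (hS : Good ω (dirs ρ H ω))
    (sim : ∀ h ∈ H, ∃ m : F, m ≠ 0 ∧ ∀ x y, ω (ρ h x) (ρ h y) = m * ω x y)
    (prim : ¬ ∃ k : ℕ, 2 ≤ k ∧ ∃ Vs : Fin k → Submodule F V,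
        (∀ idx, Vs idx ≠ ⊥) ∧ iSupIndep Vs ∧ (⨆ idx, Vs idx) = ⊤ ∧
        ∀ h ∈ H, ∃ π : Equiv.Perm (Fin k), ∀ idx, (Vs idx).map (ρ h) = Vs (π idx))
    (x : V) (hx : x ≠ 0) : x ∈ dirs ρ H ω := by
  refine hS.all ?_ x hx
  by_contra! hcon
  obtain ⟨u, hu, v, hv, huv⟩ := hcon
  apply prim
  set S := dirs ρ H ω with hSdef
  have fin : Finite (cls ω S '' S) := inferInstance
  have e := Finite.equivFin (cls ω S '' S)
  refine ⟨Nat.card (cls ω S '' S), ?_, fun i => ((e.symm i : (cls ω S '' S)) : Submodule F V),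
    ?_, ?_, ?_, ?_⟩
  · have : Nontrivial (cls ω S '' S) := by
      refine ⟨⟨_, u, hu, rfl⟩, ⟨_, v, hv, rfl⟩, ?_⟩
      intro h
      have h' : cls ω S u = cls ω S v := congrArg Subtype.val h
      apply hS.nz u hu
      apply hS.zero_of_orth
      intro s hs
      by_cases hr : Rel ω S u s
      · refine hS.cls_orth (u := v) hs ?_ (h' ▸ hS.cls_mem hu)
        intro hr'
        exact huv (hS.trans hs hr hr'.symm)
      · exact hS.cls_orth hs hr (hS.cls_mem hu)
    exact Finite.one_lt_card
  · intro i h0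
    obtain ⟨w, hw, hwe⟩ := (e.symm i).2
    replace h0 : cls ω S w = ⊥ := hwe.trans h0
    have := hS.cls_mem hw
    rw [h0, Submodule.mem_bot] at this
    exact hS.nz w hw this
  · exact hS.indep.comp e.symm.injective
  · rw [← hS.isup]
    exact e.symm.iSup_comp (g := fun W : (cls ω S '' S) => (W : Submodule F V))
  · intro h hh
    obtain ⟨m, hm, hω⟩ := sim h hh
    have key : ∀ W : (cls ω S '' S), (W : Submodule F V).map (ρ h) ∈ cls ω S '' S := by
      rintro ⟨W, w, hw, rfl⟩
      refine ⟨ρ h w, dirs_stable sim h hh w hw, ?_⟩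
      exact (hS.map_cls (ρ h) (ρ h⁻¹) (rho_inv_right ρ h) (dirs_stable sim h hh)
        (dirs_stable sim h⁻¹ (H.inv_mem hh)) m hm hω w).symm
    let f : (cls ω S '' S) → (cls ω S '' S) := fun W => ⟨_, key W⟩
    have hf : Function.Injective f := by
      intro W W' hWW
      apply Subtype.ext
      have : (W : Submodule F V).map (ρ h) = (W' : Submodule F V).map (ρ h) :=
        congrArg Subtype.val hWW
      exact Submodule.map_injective_of_injective
        (Function.LeftInverse.injective (rho_inv_left ρ h)) this
    let p : Equiv.Perm (cls ω S '' S) := Equiv.ofBijective f (Finite.injective_iff_bijective.mp hf)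
    refine ⟨(e.symm.trans p).trans e, fun i => ?_⟩
    change _ = ((e.symm (e (p (e.symm i))) : (cls ω S '' S)) : Submodule F V)
    rw [Equiv.symm_apply_apply]
    rfl

theorem fix_trans {t : G} (c : F) (v : V) (ht : ∀ x, ρ t x = x + (c * ω x v) • v) (x : V)
    (hx : ω x v = 0) : ρ t x = x := by simp [ht, hx]

theorem trans_pres (alt : ∀ x, ω x x = 0) {t : G} (c : F) (v : V)
    (ht : ∀ x, ρ t x = x + (c * ω x v) • v) (x y : V) : ω (ρ t x) (ρ t y) = ω x y := by
  simp only [ht, map_add, map_smul, LinearMap.add_apply, LinearMap.smul_apply, smul_eq_mul, alt]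
  rw [skew alt v y]
  ring

/-- move `x` to `y` by a transvection -/
theorem move (alt : ∀ x, ω x x = 0)
    (all : ∀ v : V, v ≠ 0 → v ∈ dirs ρ H ω) (x y : V) (h : ω x y ≠ 0) :
    ∃ t ∈ H, ρ t x = y ∧ (∀ z, ω z x = ω z y → ρ t z = z) ∧
      ∀ a b, ω (ρ t a) (ρ t b) = ω a b := by
  have hne : y - x ≠ 0 := by
    intro h0
    rw [sub_eq_zero.mp h0] at h
    exact h (alt x)
  obtain ⟨t, ht, htx⟩ := (all _ hne).2 (ω x y)⁻¹
  refine ⟨t, ht, ?_, ?_, trans_pres alt _ _ htx⟩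
  · rw [htx, map_sub, alt, sub_zero, inv_mul_cancel₀ h]
    module
  · intro z hz
    apply fix_trans _ _ htx
    rw [map_sub, hz, sub_self]

theorem improve (alt : ∀ x, ω x x = 0) (nondeg : ∀ x, (∀ y, ω x y = 0) → x = 0)
    (all : ∀ v : V, v ≠ 0 → v ∈ dirs ρ H ω) (B : G)
    (hB : ∀ x y, ω (ρ B x) (ρ B y) = ω x y) (h1 : ρ B ≠ 1) :
    ∃ t ∈ H, (∀ x y, ω (ρ t x) (ρ t y) = ω x y) ∧ (∀ z, ρ B z = z → ρ t z = z) ∧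
      ∃ x, ρ B x ≠ x ∧ ρ t (ρ B x) = x := by
  have fixp : ∀ z x, ρ B z = z → ω z (ρ B x) = ω z x := by
    intro z x hz
    conv_lhs => rw [← hz, hB]
  by_cases h : ∃ x, ω (ρ B x) x ≠ 0
  · obtain ⟨x, hx⟩ := h
    obtain ⟨t, ht, a, b, c⟩ := move alt all _ _ hx
    refine ⟨t, ht, c, fun z hz => b z (fixp z x hz), x, ?_, a⟩
    intro h0
    rw [h0] at hx
    exact hx (alt x)
  · push Not at h
    obtain ⟨x, hx⟩ : ∃ x, ρ B x ≠ x := by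
      by_contra! h0
      exact h1 (LinearMap.ext h0)
    obtain ⟨y, hy⟩ : ∃ y, ω (ρ B x - x) y ≠ 0 := by
      by_contra! h0
      exact hx (sub_eq_zero.mp (nondeg _ h0))
    have pol : ω (ρ B x) y = ω x (ρ B y) := by
      have e := h (x + y)
      simp only [map_add, LinearMap.add_apply, h] at e
      rw [skew alt (ρ B y) x] at e
      linear_combination e
    simp only [map_sub, LinearMap.sub_apply] at hy
    obtain ⟨t, ht, a, b, c⟩ := move alt all (ρ B x) (x + ρ B y - y) (by
      simp only [map_sub, map_add, h, hB]
      intro h0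
      apply hy
      linear_combination -h0)
    obtain ⟨t', ht', a', b', c'⟩ := move alt all (x + ρ B y - y) x (by
      simp only [map_sub, map_add, LinearMap.sub_apply, LinearMap.add_apply, alt]
      rw [skew alt (ρ B y) x, skew alt y x, ← pol]
      intro h0
      apply hy
      linear_combination -h0)
    refine ⟨t' * t, H.mul_mem ht' ht, ?_, ?_, x, hx, ?_⟩
    · intro p q
      simp only [map_mul, Module.End.mul_apply, c, c']
    · intro z hz
      rw [map_mul, Module.End.mul_apply, b, b']
      · simp [fixp z y hz]
      · simp [fixp z y hz, fixp z x hz]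
    · rw [map_mul, Module.End.mul_apply, a, a']

theorem generate [FiniteDimensional F V] (inj : Function.Injective ρ)
    (alt : ∀ x, ω x x = 0) (nondeg : ∀ x, (∀ y, ω x y = 0) → x = 0)
    (all : ∀ v : V, v ≠ 0 → v ∈ dirs ρ H ω) (n : ℕ) : ∀ B : G,
    (∀ x y, ω (ρ B x) (ρ B y) = ω x y) →
    Module.finrank F V ≤ n + Module.finrank F (LinearMap.ker (ρ B - 1)) → B ∈ H := by
  have memk : ∀ (B : G) x, x ∈ LinearMap.ker (ρ B - 1) ↔ ρ B x = x := by
    intro B x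
    simp [LinearMap.mem_ker, sub_eq_zero]
  induction n with
  | zero =>
    intro B hB hn
    have : LinearMap.ker (ρ B - 1) = ⊤ := by
      apply Submodule.eq_top_of_finrank_eq
      exact le_antisymm (Submodule.finrank_le _) (by simpa using hn)
    have h1 : B = 1 := by
      apply inj
      rw [map_one]
      exact sub_eq_zero.mp (LinearMap.ker_eq_top.mp this)
    rw [h1]
    exact H.one_mem
  | succ n ih =>
    intro B hB hn
    by_cases h1 : ρ B = 1
    · have : B = 1 := inj (by rw [h1, map_one])
      rw [this]
      exact H.one_mem
    obtain ⟨t, ht, pres, fix, x, hx, hx'⟩ := improve alt nondeg all B hB h1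
    have hlt : LinearMap.ker (ρ B - 1) < LinearMap.ker (ρ (t * B) - 1) := by
      refine SetLike.lt_iff_le_and_exists.mpr ⟨?_, x, ?_, ?_⟩
      · intro z hz
        rw [memk] at hz ⊢
        rw [map_mul, Module.End.mul_apply, hz, fix z hz]
      · rw [memk, map_mul, Module.End.mul_apply, hx']
      · rwa [memk]
    have hfr := Submodule.finrank_lt_finrank_of_lt hlt
    have := ih (t * B) (by intro p q; simp only [map_mul, Module.End.mul_apply, pres, hB])
      (by omega)
    exact (Subgroup.mul_mem_cancel_left H ht).mp this

/-- an element fixing a hyperplane is a transvection -/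
theorem exists_dir {p : ℕ} [Fact p.Prime] {V : Type} [AddCommGroup V] [Module (ZMod p) V]
    [FiniteDimensional (ZMod p) V]
    {ω : V →ₗ[ZMod p] V →ₗ[ZMod p] ZMod p} {ρ : G →* Module.End (ZMod p) V}
    (alt : ∀ x, ω x x = 0) (nondeg : ∀ x, (∀ y, ω x y = 0) → x = 0)
    (sim : ∀ h ∈ H, ∃ m : ZMod p, m ≠ 0 ∧ ∀ x y, ω (ρ h x) (ρ h y) = m * ω x y)
    (h : G) (hh : h ∈ H) (h1 : ρ h ≠ 1) (W : Submodule (ZMod p) V)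
    (hW : Module.finrank (ZMod p) V = Module.finrank (ZMod p) W + 1)
    (hW2 : 2 ≤ Module.finrank (ZMod p) W)
    (fix : ∀ v ∈ W, ρ h v = v) : ∃ v, v ∈ dirs ρ H ω := by
  obtain ⟨x₀, hx₀⟩ : ∃ x, ρ h x ≠ x := by
    by_contra! h0
    exact h1 (LinearMap.ext h0)
  have hx₀W : x₀ ∉ W := fun h0 => hx₀ (fix _ h0)
  have dec : ∀ x, ∃ w ∈ W, ∃ a : ZMod p, x = w + a • x₀ := by
    have htop : W ⊔ Submodule.span (ZMod p) {x₀} = ⊤ := by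
      apply Submodule.eq_top_of_finrank_eq
      apply le_antisymm (Submodule.finrank_le _)
      rw [hW, Nat.succ_le_iff]
      apply Submodule.finrank_lt_finrank_of_lt
      refine SetLike.lt_iff_le_and_exists.mpr ⟨le_sup_left, x₀, ?_, hx₀W⟩
      exact (le_sup_right : _ ≤ W ⊔ _) (Submodule.mem_span_singleton_self x₀)
    intro x
    have hx : x ∈ W ⊔ Submodule.span (ZMod p) {x₀} := by rw [htop]; trivial
    obtain ⟨w, hw, z, hz, rfl⟩ := Submodule.mem_sup.mp hx
    obtain ⟨a, rfl⟩ := Submodule.mem_span_singleton.mp hz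
    exact ⟨w, hw, a, rfl⟩
  obtain ⟨m, hm, hω⟩ := sim h hh
  have m1 : m = 1 := by
    by_contra hm1
    have iso : ∀ a ∈ W, ∀ b ∈ W, ω a b = 0 := by
      intro a ha b hb
      have e := hω a b
      rw [fix a ha, fix b hb] at e
      have : (m - 1) * ω a b = 0 := by linear_combination -e
      exact (mul_eq_zero.mp this).resolve_left (sub_ne_zero.mpr hm1)
    have hinj : Function.Injective ((ω.flip x₀).comp W.subtype) := by
      rw [← LinearMap.ker_eq_bot, LinearMap.ker_eq_bot']
      rintro ⟨w, hw⟩ hw0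
      apply Subtype.ext
      apply nondeg
      intro y
      obtain ⟨b, hb, a, rfl⟩ := dec y
      have hw0 : ω w x₀ = 0 := hw0
      simp [iso w hw b hb, hw0]
    have := LinearMap.finrank_le_finrank_of_injective hinj
    rw [Module.finrank_self] at this
    omega
  subst m1
  set u := ρ h x₀ - x₀ with hu
  have hu0 : u ≠ 0 := sub_ne_zero.mpr hx₀
  have orth : ∀ w ∈ W, ω w u = 0 := by
    intro w hw
    have e := hω w x₀
    rw [fix w hw] at e
    rw [hu, map_sub, e]
    ring
  have hne : ω x₀ u ≠ 0 := by
    intro h0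
    apply hu0
    apply nondeg
    intro y
    obtain ⟨b, hb, a, rfl⟩ := dec y
    rw [skew alt]
    simp [orth b hb, h0]
  have form : ∀ x, ρ h x = x + ((ω x₀ u)⁻¹ * ω x u) • u := by
    intro x
    obtain ⟨b, hb, a, rfl⟩ := dec x
    have e : (ω x₀ u)⁻¹ * ω (b + a • x₀) u = a := by
      simp only [map_add, map_smul, LinearMap.add_apply, LinearMap.smul_apply, orth b hb,
        smul_eq_mul]
      field_simp
      ring
    rw [e, map_add, map_smul, fix b hb, hu]
    module
  refine ⟨u, hu0, fun c => ?_⟩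
  have pw : ∀ n : ℕ, ∀ x, ρ (h ^ n) x = x + ((n : ZMod p) * (ω x₀ u)⁻¹ * ω x u) • u := by
    intro n
    induction n with
    | zero => intro x; simp
    | succ n ih =>
      intro x
      rw [pow_succ, map_mul, Module.End.mul_apply, form, ih]
      simp only [map_add, map_smul, LinearMap.add_apply, LinearMap.smul_apply, alt, smul_eq_mul]
      push_cast
      module
  refine ⟨h ^ (c * ω x₀ u).val, H.pow_mem hh _, fun x => ?_⟩
  rw [pw, ZMod.natCast_zmod_val, mul_assoc c, mul_inv_cancel₀ hne, mul_one]

end Monod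

/-- the symplectic form -/
theorem omega_alt (g : ℕ) (R : Type) [Field R] (two : (2 : R) ≠ 0) (x : Fin (2*g) → R) :
    Matrix.toBilin' (OmegaMat g R) x x = 0 := by
  have sk : ∀ i j, OmegaMat g R i j = - OmegaMat g R j i := by
    intro i j
    simp only [OmegaMat, Matrix.of_apply]
    split_ifs <;> first | omega | simp
  have h : Matrix.toBilin' (OmegaMat g R) x x = - Matrix.toBilin' (OmegaMat g R) x x := by
    simp only [Matrix.toBilin'_apply]
    conv_lhs => rw [Finset.sum_comm]
    simp only [← Finset.sum_neg_distrib]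
    refine Finset.sum_congr rfl fun i _ => Finset.sum_congr rfl fun j _ => ?_
    rw [sk j i]
    ring
  have h2 : (2 : R) * Matrix.toBilin' (OmegaMat g R) x x = 0 := by linear_combination h
  exact (mul_eq_zero.mp h2).resolve_left two

theorem omega_nondeg (g : ℕ) (R : Type) [CommRing R] (x : Fin (2*g) → R)
    (h : ∀ y, Matrix.toBilin' (OmegaMat g R) x y = 0) : x = 0 := by
  funext i
  have hi := i.2
  have key : ∀ j, ∑ i, x i * OmegaMat g R i j = 0 := by
    intro j
    have := h (Pi.single j 1)
    rw [Matrix.toBilin'_apply'] at this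
    simpa [dotProduct, Matrix.mulVec_single] using this
  rcases Nat.mod_two_eq_zero_or_one i with h0 | h0
  · have := key ⟨i + 1, by omega⟩
    rw [Finset.sum_eq_single i] at this
    · have e : ((i : ℕ) + 1) % 2 = 1 := by omega
      simpa [OmegaMat, e] using this
    · intro b _ hb
      have hb' : (b : ℕ) ≠ i := fun h => hb (Fin.ext h)
      have e : ¬ ((i : ℕ) + 1 + 1 = b ∧ (b : ℕ) % 2 = 1) := by omega
      simp [OmegaMat, hb', e]
    · simp
  · have := key ⟨i - 1, by omega⟩
    rw [Finset.sum_eq_single i] at this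
    · have e : ¬ ((i : ℕ) + 1 = i - 1 ∧ ((i : ℕ) - 1) % 2 = 1) := by omega
      have e' : ((i : ℕ) - 1 + 1 = i ∧ (i : ℕ) % 2 = 1) := by omega
      simp only [OmegaMat, Matrix.of_apply, if_neg e, if_pos e'] at this
      simpa using this
    · intro b _ hb
      have hb' : (b : ℕ) ≠ i := fun h => hb (Fin.ext h)
      have e : ¬ ((b : ℕ) + 1 = i - 1 ∧ ((i : ℕ) - 1) % 2 = 1) := by omega
      have e' : ¬ ((i : ℕ) - 1 + 1 = b ∧ (b : ℕ) % 2 = 1) := by omega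
      simp only [OmegaMat, Matrix.of_apply, if_neg e, if_neg e', mul_zero]
    · simp

theorem omega_map (g : ℕ) (R : Type) [CommRing R] (m : R)
    (S : Matrix (Fin (2*g)) (Fin (2*g)) R) (hS : Sᵀ * OmegaMat g R * S = m • OmegaMat g R)
    (x y : Fin (2*g) → R) :
    Matrix.toBilin' (OmegaMat g R) (S.mulVecLin x) (S.mulVecLin y) =
      m * Matrix.toBilin' (OmegaMat g R) x y := by
  simp only [Matrix.toBilin'_apply', Matrix.mulVecLin_apply]
  rw [Matrix.mulVec_mulVec, Matrix.dotProduct_mulVec, Matrix.vecMul_mulVec,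
    ← Matrix.dotProduct_mulVec, ← Matrix.mul_assoc, hS, Matrix.smul_mulVec, dotProduct_smul,
    smul_eq_mul]

/-- the standard action -/
def rhoGL (n : ℕ) (R : Type) [CommRing R] :
    GL (Fin n) R →* Module.End R (Fin n → R) where
  toFun h := (h : Matrix (Fin n) (Fin n) R).mulVecLin
  map_one' := by simp [Module.End.one_eq_id]
  map_mul' a b := by simp [Matrix.mulVecLin_mul, Module.End.mul_eq_comp]

theorem rhoGL_inj (n : ℕ) (R : Type) [CommRing R] : Function.Injective (rhoGL n R) := by
  intro a b h
  apply Units.ext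
  exact Matrix.toLin'.injective h

/-- Let `g ≥ 2` and `ℓ ≥ 3` prime, and let `H ⊆ GSp_{2g}(ℤ/ℓℤ)` be a subgroup such that:
(A) `H` contains a transvection (a nonidentity element of determinant `1` fixing pointwise a
codimension-1 subspace of `(ℤ/ℓℤ)^{2g}`); (B) `H` acts irreducibly on `(ℤ/ℓℤ)^{2g}`; and
(C) `H` acts primitively on `(ℤ/ℓℤ)^{2g}` (there is no direct-sum decomposition into `k ≥ 2`
nonzero subspaces permuted by `H`). Then `H ⊇ Sp_{2g}(ℤ/ℓℤ)`. -/
theorem maximal_monodromy_stmt16 (g ℓ : ℕ) (hg : 2 ≤ g) (hℓp : ℓ.Prime) (hℓ3 : 3 ≤ ℓ)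
    (H : Subgroup (GL (Fin (2*g)) (ZMod ℓ)))
    (hGSp : (H : Set (GL (Fin (2*g)) (ZMod ℓ))) ⊆ GSpSet g (ZMod ℓ))
    (hA : ∃ h ∈ H, h ≠ 1 ∧ (h : Matrix (Fin (2*g)) (Fin (2*g)) (ZMod ℓ)).det = 1 ∧
      ∃ V : Submodule (ZMod ℓ) (Fin (2*g) → ZMod ℓ),
        Module.finrank (ZMod ℓ) V = 2*g - 1 ∧
        ∀ v ∈ V, (h : Matrix (Fin (2*g)) (Fin (2*g)) (ZMod ℓ)).mulVec v = v)
    (hB : ∀ V : Submodule (ZMod ℓ) (Fin (2*g) → ZMod ℓ),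
      (∀ h ∈ H, ∀ v ∈ V, (h : Matrix (Fin (2*g)) (Fin (2*g)) (ZMod ℓ)).mulVec v ∈ V) →
      V = ⊥ ∨ V = ⊤)
    (hC : ¬ ∃ k : ℕ, 2 ≤ k ∧
      ∃ Vs : Fin k → Submodule (ZMod ℓ) (Fin (2*g) → ZMod ℓ),
        (∀ idx, Vs idx ≠ ⊥) ∧ iSupIndep Vs ∧ (⨆ idx, Vs idx) = ⊤ ∧
        ∀ h ∈ H, ∃ π : Equiv.Perm (Fin k), ∀ idx,
          (Vs idx).map
            (Matrix.mulVecLin (h : Matrix (Fin (2*g)) (Fin (2*g)) (ZMod ℓ))) = Vs (π idx)) :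
    ∀ B : GL (Fin (2*g)) (ZMod ℓ), B ∈ SpSet g (ZMod ℓ) → B ∈ H := by
  have : Fact ℓ.Prime := ⟨hℓp⟩
  have two : (2 : ZMod ℓ) ≠ 0 := by
    intro h
    have h' : ((2 : ℕ) : ZMod ℓ) = 0 := by exact_mod_cast h
    rw [ZMod.natCast_eq_zero_iff] at h'
    have := Nat.le_of_dvd (by norm_num) h'
    omega
  have alt := omega_alt g (ZMod ℓ) two
  have nondeg := omega_nondeg g (ZMod ℓ)
  have sim : ∀ h ∈ H, ∃ m : ZMod ℓ, m ≠ 0 ∧ ∀ x y,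
      Matrix.toBilin' (OmegaMat g (ZMod ℓ)) (rhoGL (2*g) (ZMod ℓ) h x) (rhoGL (2*g) (ZMod ℓ) h y) =
        m * Matrix.toBilin' (OmegaMat g (ZMod ℓ)) x y := by
    intro h hh
    obtain ⟨m, hm⟩ := hGSp hh
    exact ⟨m, m.ne_zero, omega_map g (ZMod ℓ) m _ hm⟩
  obtain ⟨t, ht, ht1, -, W, hW, fix⟩ := hA
  have hfr : Module.finrank (ZMod ℓ) (Fin (2*g) → ZMod ℓ) = 2*g := by simp
  have ne := Monod.exists_dir alt nondeg sim t ht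
    (fun h0 => ht1 (rhoGL_inj _ _ (by rw [h0, map_one]))) W (by omega) (by omega) fix
  have good := Monod.dirs_good two alt nondeg sim hB ne
  have all := Monod.dirs_all good sim hC
  intro B hB'
  refine Monod.generate (rhoGL_inj _ _) alt nondeg all (2*g) B ?_ (by omega)
  intro x y
  have := omega_map g (ZMod ℓ) 1 (B : Matrix (Fin (2*g)) (Fin (2*g)) (ZMod ℓ))
    (by rw [one_smul]; exact hB') x y
  rw [one_mul] at this
  exact this
end

section
/- Let n ≥ 2 and let U ⊆ ℂ^n be the set of tuples a = (a_0, …, a_{n−1}) such that the monic polynomial p_a(x) = x^n + a_{n−1}x^{n−1} + ⋯ + a_1 x + a_0 has no repeated complex root, and let Z = {a ∈ U : a_{n−1} = 0}. Define Φ : U × [0,1] → ℂ^n by letting Φ(a,t) be the coefficient vector of the monic polynomial p_a(x − t·a_{n−1}/n) (equivalently, translating each root z of p_a to z + t·a_{n−1}/n). Then Φ is a strong deformation retraction of U onto Z: Φ is continuous, Φ(a,t) ∈ U for all (a,t), Φ(a,0) = a for all a ∈ U, Φ(a,1) ∈ Z for all a ∈ U, and Φ(a,t) = a for all a ∈ Z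 and t ∈ [0,1]. -/
open Polynomial

/-- The monic polynomial `p_a(x) = x^n + a_{n−1}x^{n−1} + ⋯ + a_1 x + a_0` with coefficient
vector `a ∈ ℂ^n`. -/
noncomputable def coeffPoly (n : ℕ) (a : Fin n → ℂ) : Polynomial ℂ :=
  X ^ n + ∑ i : Fin n, C (a i) * X ^ (i : ℕ)

/-- The homotopy `Φ`: `Φ(a,t)` is the coefficient vector of the monic polynomial
`p_a(x − t·a_{n−1}/n)`, i.e. each root `z` of `p_a` is translated to `z + t·a_{n−1}/n`. -/
noncomputable def retractMap (n : ℕ) (hn : 0 < n) (a : Fin n → ℂ) (t : ℝ) : Fin n → ℂ :=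
  fun i =>
    ((coeffPoly n a).comp
      (X - C ((t : ℂ) * a (⟨n - 1, by omega⟩ : Fin n) / (n : ℂ)))).coeff (i : ℕ)

theorem coeffPoly_coeff_lt (n : ℕ) (a : Fin n → ℂ) (i : Fin n) :
    (coeffPoly n a).coeff (i : ℕ) = a i := by
  unfold coeffPoly
  rw [coeff_add, coeff_X_pow, if_neg (by omega), finsetSum_coeff, Finset.sum_eq_single i]
  · simp
  · intro j _ hj
    rw [coeff_C_mul_X_pow, if_neg]
    intro h
    exact hj (Fin.ext h.symm)
  · simp

theorem coeffPoly_sum_degree_lt (n : ℕ) (a : Fin n → ℂ) :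
    (∑ i : Fin n, C (a i) * X ^ (i : ℕ)).degree < (n : WithBot ℕ) := by
  refine lt_of_le_of_lt (degree_sum_le _ _) ?_
  refine (Finset.sup_lt_iff (WithBot.bot_lt_coe n)).2 ?_
  intro i _
  exact lt_of_le_of_lt (degree_C_mul_X_pow_le _ _) (WithBot.coe_lt_coe.2 i.2)

theorem coeffPoly_monic (n : ℕ) (a : Fin n → ℂ) : (coeffPoly n a).Monic :=
  monic_X_pow_add (coeffPoly_sum_degree_lt n a)

theorem coeffPoly_natDegree (n : ℕ) (a : Fin n → ℂ) : (coeffPoly n a).natDegree = n := by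
  unfold coeffPoly
  apply natDegree_eq_of_degree_eq_some
  rw [degree_add_eq_left_of_degree_lt] <;> rw [degree_X_pow]
  exact coeffPoly_sum_degree_lt n a

theorem coeffPoly_of_monic (n : ℕ) (p : Polynomial ℂ) (hp : p.Monic) (hd : p.natDegree = n) :
    coeffPoly n (fun i : Fin n => p.coeff (i : ℕ)) = p := by
  subst hd
  conv_rhs => rw [hp.as_sum]
  unfold coeffPoly
  rw [Fin.sum_univ_eq_sum_range (fun i => C (p.coeff i) * X ^ i)]

theorem coeffPoly_retractMap (n : ℕ) (hn : 0 < n) (a : Fin n → ℂ) (t : ℝ) :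
    coeffPoly n (retractMap n hn a t) = (coeffPoly n a).comp
      (X - C ((t : ℂ) * a (⟨n - 1, by omega⟩ : Fin n) / (n : ℂ))) := by
  apply coeffPoly_of_monic
  · exact (coeffPoly_monic n a).comp_X_sub_C _
  · rw [natDegree_comp, coeffPoly_natDegree, natDegree_X_sub_C, mul_one]

theorem separable_comp_X_sub_C (p : Polynomial ℂ) (hp : p.Separable) (c : ℂ) :
    (p.comp (X - C c)).Separable := by
  have h : IsCoprime (p.comp (X - C c)) (p.derivative.comp (X - C c)) :=
    IsCoprime.map hp (compRingHom (X - C c))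
  unfold Polynomial.Separable
  rw [derivative_comp]
  simpa using h

theorem coeff_comp_formula (n : ℕ) (a : Fin n → ℂ) (c : ℂ) (k : ℕ) :
    ((coeffPoly n a).comp (X - C c)).coeff k =
      (-c) ^ (n - k) * (n.choose k : ℂ) +
        ∑ j : Fin n, a j * ((-c) ^ ((j : ℕ) - k) * ((j : ℕ).choose k : ℂ)) := by
  have e : (X - C c : Polynomial ℂ) = X + C (-c) := by simp [sub_eq_add_neg]
  rw [e]
  unfold coeffPoly
  simp only [add_comp, X_pow_comp, Polynomial.sum_comp, mul_comp, C_comp, coeff_add, finsetSum_coeff,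
    coeff_C_mul, coeff_X_add_C_pow]

theorem retractMap_eq_self (n : ℕ) (hn : 0 < n) (a : Fin n → ℂ) (t : ℝ)
    (h : (t : ℂ) * a (⟨n - 1, by omega⟩ : Fin n) / (n : ℂ) = 0) : retractMap n hn a t = a := by
  funext i
  unfold retractMap
  rw [h]
  simp [coeffPoly_coeff_lt]

/-- Let `n ≥ 2`, let `U ⊆ ℂ^n` be the set of coefficient vectors `a` such that
`p_a(x) = x^n + a_{n−1}x^{n−1} + ⋯ + a_0` has no repeated complex root (equivalently, is
separable), and let `Z = {a ∈ U : a_{n−1} = 0}`. Then `Φ` is a strong deformation retraction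
of `U` onto `Z`: `Φ` is continuous on `U × [0,1]`; `Φ(a,t) ∈ U` for all `(a,t) ∈ U × [0,1]`;
`Φ(a,0) = a`; `Φ(a,1) ∈ Z` (it lies in `U` by the second part, and its `(n−1)`-st coordinate
vanishes); and `Φ(a,t) = a` whenever `a ∈ Z`. -/
theorem maximal_monodromy_stmt17 (n : ℕ) (hn : 2 ≤ n) :
    ContinuousOn (fun x : (Fin n → ℂ) × ℝ => retractMap n (by omega) x.1 x.2)
      ({a : Fin n → ℂ | (coeffPoly n a).Separable} ×ˢ Set.Icc (0:ℝ) 1) ∧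
    (∀ a : Fin n → ℂ, (coeffPoly n a).Separable → ∀ t ∈ Set.Icc (0:ℝ) 1,
      (coeffPoly n (retractMap n (by omega) a t)).Separable) ∧
    (∀ a : Fin n → ℂ, (coeffPoly n a).Separable → retractMap n (by omega) a 0 = a) ∧
    (∀ a : Fin n → ℂ, (coeffPoly n a).Separable →
      retractMap n (by omega) a 1 (⟨n - 1, by omega⟩ : Fin n) = 0) ∧
    (∀ a : Fin n → ℂ, (coeffPoly n a).Separable → a (⟨n - 1, by omega⟩ : Fin n) = 0 →
      ∀ t ∈ Set.Icc (0:ℝ) 1, retractMap n (by omega) a t = a) := by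
  refine ⟨?_, ?_, ?_, ?_, ?_⟩
  · apply Continuous.continuousOn
    refine continuous_pi fun i => ?_
    simp only [retractMap, coeff_comp_formula]
    fun_prop
  · intro a ha t _
    rw [coeffPoly_retractMap]
    exact separable_comp_X_sub_C _ ha _
  · intro a _
    exact retractMap_eq_self n _ a 0 (by simp)
  · intro a _
    have hn0 : (n : ℂ) ≠ 0 := by
      have : n ≠ 0 := by omega
      exact_mod_cast this
    simp only [retractMap, coeff_comp_formula]
    rw [Finset.sum_eq_single (⟨n - 1, by omega⟩ : Fin n)]
    · have h1 : n - (n - 1) = 1 := by omega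
      have h2 : n.choose (n - 1) = n := by
        rw [Nat.choose_symm (by omega : 1 ≤ n), Nat.choose_one_right]
      rw [h1, h2]
      simp only [Nat.choose_self, Nat.sub_self]
      push_cast
      field_simp
      ring
    · intro j _ hj
      have : (j : ℕ) < n - 1 := by
        have h3 : (j : ℕ) ≠ n - 1 := fun h => hj (Fin.ext h)
        omega
      rw [Nat.choose_eq_zero_of_lt this]
      simp
    · simp
  · intro a _ h t _
    exact retractMap_eq_self n _ a t (by rw [h]; simp)
end
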